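/- Assume condition (C) and let q satisfy: q ∈ (u₁,u₀) if (K,c) ∈ D₁ with μ_b(K,c) ≥ μ_f(K,c) (i.e. (K,c) ∈ D_{1,1} ∪ D_{1,3}), or q ∈ (u₀,u₂) if either (K,c) ∈ D₁ with μ_b(K,c) < μ_f(K,c) (i.e. (K,c) ∈ D_{1,2}) or (K,c) ∈ D₂. Then there exists a value μ_per = μ_per(K,c,q) ∈ ℝ such that the system (TV) with parameter μ = μ_per has a nonconstant periodic solution (u,w) with u > 0 satisfying the initial condition (u(0),w(0)) = (q,0). -/

import Mathlib

open Set Filter MeasureTheory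

noncomputable section

namespace TrafficTW

/-- `f(u) = (K u - V(u) - c)/K`. -/
def fTV (V : ℝ → ℝ) (K c u : ℝ) : ℝ := (K * u - V u - c) / K

/-- `f'(u) = (K - V'(u))/K`. -/
def fdTV (V' : ℝ → ℝ) (K u : ℝ) : ℝ := (K - V' u) / K

/-- `h(u,μ) = f'(u) + μ`. -/
def hTV (V' : ℝ → ℝ) (K μ u : ℝ) : ℝ := fdTV V' K u + μ

/-- `g₁(u) = 1/(τ κ(1/u))`. -/
def g1TV (κ : ℝ → ℝ) (τ u : ℝ) : ℝ := 1 / (τ * κ (1 / u))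

/-- `g₂(u) = u/(2 τ κ(1/u))`. -/
def g2TV (κ : ℝ → ℝ) (τ u : ℝ) : ℝ := u / (2 * τ * κ (1 / u))

/-- The traveling-wave system (TV): `u' = w`, `w' = g₁ f + g₂ h w`. -/
def IsTVSol (V V' κ : ℝ → ℝ) (τ K c μ : ℝ) (u w : ℝ → ℝ) : Prop :=
  (∀ z, HasDerivAt u (w z) z) ∧
  (∀ z, HasDerivAt w
    (g1TV κ τ (u z) * fTV V K c (u z) + g2TV κ τ (u z) * hTV V' K μ (u z) * w z) z)

/-- Assumption (A1), where `V'` and `V''` are the first and second derivatives of `V`. -/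
def A1 (V V' V'' : ℝ → ℝ) (UM : ℝ) : Prop :=
  (∀ u ∈ Ici (0:ℝ), HasDerivWithinAt V (V' u) (Ici 0) u) ∧
  ContinuousOn V' (Ici 0) ∧
  (∀ u ∈ Ioi (0:ℝ), HasDerivAt V' (V'' u) u) ∧
  ContinuousOn V'' (Ioi 0) ∧
  (∀ u, 0 < u → 0 < V' u) ∧ (∃ M, ∀ u, 0 < u → V' u ≤ M) ∧
  Tendsto V' atTop (nhds 0) ∧
  0 < UM ∧ (∀ u, 0 < u → V' u ≤ V' UM) ∧
  (∀ u, 0 < u → (V'' u = 0 ↔ u = UM))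

/-- Assumption (A2). -/
def A2 (κ : ℝ → ℝ) : Prop :=
  ContDiffOn ℝ 1 κ (Ioi 0) ∧ ∀ ρ, 0 < ρ → 0 < κ ρ

/-- `c₀ = -V(0)`. -/
def c0v (V : ℝ → ℝ) : ℝ := - V 0

/-- `c_M(K) = K u_M(K) - V(u_M(K))`, where `uMx` is the function `K ↦ u_M(K)`. -/
def cMf (V : ℝ → ℝ) (uMx : ℝ → ℝ) (K : ℝ) : ℝ := K * uMx K - V (uMx K)

/-- `c_m(K) = K u_m(K) - V(u_m(K))`, where `umx` is the function `K ↦ u_m(K)`. -/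
def cmf (V : ℝ → ℝ) (umx : ℝ → ℝ) (K : ℝ) : ℝ := K * umx K - V (umx K)

/-- `c₁(K) = max (c₀, c_m(K))`. -/
def c1f (V : ℝ → ℝ) (umx : ℝ → ℝ) (K : ℝ) : ℝ := max (c0v V) (cmf V umx K)

/-- `uMx K = u_M(K)` is the unique local maximum point of `u ↦ K u - V(u)`, characterized
by `u_M(K) ∈ (0, U_M)` and `V'(u_M(K)) = K`, for `K ∈ (K₀, K_M)`. -/
def UMaxHyp (V' : ℝ → ℝ) (UM : ℝ) (uMx : ℝ → ℝ) : Prop :=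
  ∀ K, V' 0 < K → K < V' UM → uMx K ∈ Ioo 0 UM ∧ V' (uMx K) = K

/-- `umx K = u_m(K)` is the unique local minimum point of `u ↦ K u - V(u)`, characterized
by `u_m(K) ∈ (U_M, ∞)` and `V'(u_m(K)) = K`, for `K ∈ (0, K_M)`. -/
def UMinHyp (V' : ℝ → ℝ) (UM : ℝ) (umx : ℝ → ℝ) : Prop :=
  ∀ K, 0 < K → K < V' UM → UM < umx K ∧ V' (umx K) = K

/-- Characterization of `K₁ ∈ (K₀, K_M)`: `c_m(K) < c₀` for `K < K₁` and `c_m(K) > c₀`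
for `K > K₁`. -/
def K1Hyp (V V' : ℝ → ℝ) (UM : ℝ) (umx : ℝ → ℝ) (K₁ : ℝ) : Prop :=
  V' 0 < K₁ ∧ K₁ < V' UM ∧
  (∀ K, 0 < K → K < K₁ → cmf V umx K < c0v V) ∧
  cmf V umx K₁ = c0v V ∧
  (∀ K, K₁ < K → K < V' UM → c0v V < cmf V umx K)

/-- The parameter region `D₁`. -/
def D1 (V V' : ℝ → ℝ) (UM : ℝ) (uMx umx : ℝ → ℝ) : Set (ℝ × ℝ) :=
  {p | V' 0 < p.1 ∧ p.1 < V' UM ∧ c1f V umx p.1 < p.2 ∧ p.2 < cMf V uMx p.1}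

/-- The parameter region `D₂`. -/
def D2 (V V' : ℝ → ℝ) (umx : ℝ → ℝ) (K₁ : ℝ) : Set (ℝ × ℝ) :=
  {p | (V' 0 < p.1 ∧ p.1 < K₁ ∧ p.2 = c0v V) ∨
       (0 < p.1 ∧ p.1 < K₁ ∧ cmf V umx p.1 < p.2 ∧ p.2 < c0v V)}

/-- For `(K,c) ∈ D₁`: `u₁ < u₀ < u₂` are the exactly three positive zeros of `f`. -/
def ZerosD1 (V : ℝ → ℝ) (K c u1 u0 u2 : ℝ) : Prop :=
  0 < u1 ∧ u1 < u0 ∧ u0 < u2 ∧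
  fTV V K c u1 = 0 ∧ fTV V K c u0 = 0 ∧ fTV V K c u2 = 0 ∧
  ∀ u, 0 < u → fTV V K c u = 0 → u = u1 ∨ u = u0 ∨ u = u2

/-- For `(K,c) ∈ D₂`: `u₀ < u₂` are the exactly two positive zeros of `f`. -/
def ZerosD2 (V : ℝ → ℝ) (K c u0 u2 : ℝ) : Prop :=
  0 < u0 ∧ u0 < u2 ∧ fTV V K c u0 = 0 ∧ fTV V K c u2 = 0 ∧
  ∀ u, 0 < u → fTV V K c u = 0 → u = u0 ∨ u = u2

/-- Condition (HE1). -/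
def HE1 (u1 u2 : ℝ) (u w : ℝ → ℝ) : Prop :=
  Tendsto u atBot (nhds u1) ∧ Tendsto u atTop (nhds u2) ∧
  Tendsto w atBot (nhds 0) ∧ Tendsto w atTop (nhds 0) ∧ ∀ z, 0 < w z

/-- Condition (HE2). -/
def HE2 (u1 u2 : ℝ) (u w : ℝ → ℝ) : Prop :=
  Tendsto u atBot (nhds u2) ∧ Tendsto u atTop (nhds u1) ∧
  Tendsto w atBot (nhds 0) ∧ Tendsto w atTop (nhds 0) ∧ ∀ z, w z < 0

/-- Condition (HO) with level `ub`. -/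
def HO (ub : ℝ) (u w : ℝ → ℝ) : Prop :=
  Tendsto u atBot (nhds ub) ∧ Tendsto u atTop (nhds ub) ∧
  Tendsto w atBot (nhds 0) ∧ Tendsto w atTop (nhds 0) ∧
  ¬ (∀ z, u z = ub ∧ w z = 0)

/-- (TV) with parameter `μ` has a positive solution satisfying (HE1). -/
def HasHE1 (V V' κ : ℝ → ℝ) (τ K c μ u1 u2 : ℝ) : Prop :=
  ∃ u w : ℝ → ℝ, IsTVSol V V' κ τ K c μ u w ∧ (∀ z, 0 < u z) ∧ HE1 u1 u2 u w

/-- (TV) with parameter `μ` has a positive solution satisfying (HE2). -/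
def HasHE2 (V V' κ : ℝ → ℝ) (τ K c μ u1 u2 : ℝ) : Prop :=
  ∃ u w : ℝ → ℝ, IsTVSol V V' κ τ K c μ u w ∧ (∀ z, 0 < u z) ∧ HE2 u1 u2 u w

/-- (TV) with parameter `μ` has a positive solution satisfying (HO) with level `ub`. -/
def HasHO (V V' κ : ℝ → ℝ) (τ K c μ ub : ℝ) : Prop :=
  ∃ u w : ℝ → ℝ, IsTVSol V V' κ τ K c μ u w ∧ (∀ z, 0 < u z) ∧ HO ub u w

/-- Condition (H): `∫₁^∞ dρ/(ρ³ κ(ρ)) = ∞`. -/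
def CondH (κ : ℝ → ℝ) : Prop :=
  ¬ IntegrableOn (fun ρ => 1 / (ρ ^ 3 * κ ρ)) (Ioi 1)

/-- Condition (C). -/
def CondC (V' κ : ℝ → ℝ) (UM K₁ K : ℝ) : Prop :=
  (K₁ < K ∧ K < V' UM) ∨ (CondH κ ∧ V' 0 < K ∧ K ≤ K₁)

/-- Periodic solution. -/
def IsPeriodicSol (u w : ℝ → ℝ) : Prop :=
  ∃ Z, 0 < Z ∧ ∀ z, u (z + Z) = u z ∧ w (z + Z) = w z

/-- Nonconstant pair of functions. -/
def Nonconst (u w : ℝ → ℝ) : Prop := ∃ z, u z ≠ u 0 ∨ w z ≠ w 0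

/-- Discriminant of the Jacobian at an equilibrium `(u,0)`. -/
def discTV (V' κ : ℝ → ℝ) (τ K u μ : ℝ) : ℝ :=
  (g2TV κ τ u) ^ 2 * (hTV V' K μ u) ^ 2 + 4 * g1TV κ τ u * fdTV V' K u

/-- The eigenvalue `λ₊(u)`. -/
def lamP (V' κ : ℝ → ℝ) (τ K u μ : ℝ) : ℝ :=
  (g2TV κ τ u * hTV V' K μ u + Real.sqrt (discTV V' κ τ K u μ)) / 2

/-- The eigenvalue `λ₋(u)`. -/
def lamM (V' κ : ℝ → ℝ) (τ K u μ : ℝ) : ℝ :=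
  (g2TV κ τ u * hTV V' K μ u - Real.sqrt (discTV V' κ τ K u μ)) / 2

/-- `Z` is the minimal period of `(u,w)`. -/
def IsMinPeriod (u w : ℝ → ℝ) (Z : ℝ) : Prop :=
  0 < Z ∧ (∀ z, u (z + Z) = u z ∧ w (z + Z) = w z) ∧
  ∀ Z', 0 < Z' → (∀ z, u (z + Z') = u z ∧ w (z + Z') = w z) → Z ≤ Z'

/-! ## Global existence for Lipschitz planar fields -/

lemma exists_sol_bounded {X : ℝ × ℝ → ℝ × ℝ} {K : NNReal} (hX : LipschitzWith K X)
    {L : NNReal} (hL : ∀ p, ‖X p‖ ≤ L) (x0 : ℝ × ℝ) (T : ℝ) (hT : 0 < T) :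
    ∃ α : ℝ → ℝ × ℝ, α 0 = x0 ∧ ∀ t ∈ Ioo (-T) T, HasDerivAt α (X (α t)) t := by
  have h0 : (0:ℝ) ∈ Icc (-T) T := ⟨by linarith, hT.le⟩
  have hpl : IsPicardLindelof (fun _ => X) (tmin := -T) (tmax := T) ⟨0, h0⟩ x0
      (L * T.toNNReal) 0 L K :=
    IsPicardLindelof.of_time_independent (fun x _ => hL x) (hX.lipschitzOnWith)
      (by simp [hT.le])
  obtain ⟨α, h1, h2⟩ := hpl.exists_eq_forall_mem_Icc_hasDerivWithinAt₀
  exact ⟨α, h1, fun t ht => (h2 t (Ioo_subset_Icc_self ht)).hasDerivAt (Icc_mem_nhds ht.1 ht.2)⟩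

/-- clamp to `[a,b]` -/
def cl (a b x : ℝ) : ℝ := max a (min x b)

lemma cl_lip (a b : ℝ) : LipschitzWith 1 (cl a b) := by
  unfold cl
  exact (LipschitzWith.id.min_const b).const_max a

lemma cl_cont (a b : ℝ) : Continuous (cl a b) := (cl_lip a b).continuous

lemma cl_mem {a b : ℝ} (h : a ≤ b) (x : ℝ) : cl a b x ∈ Icc a b := by
  unfold cl; exact ⟨le_max_left _ _, max_le h (min_le_right _ _)⟩

lemma cl_of_mem {a b x : ℝ} (h : x ∈ Icc a b) : cl a b x = x := by
  unfold cl; rw [min_eq_left h.2, max_eq_right h.1]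

lemma cl_abs_le {R : ℝ} (hR : 0 ≤ R) (x : ℝ) : |cl (-R) R x| ≤ |x| := by
  unfold cl
  rcases le_total x R with h | h <;> rcases le_total (-R) x with h' | h'
  · rw [min_eq_left h, max_eq_right h']
  · rw [min_eq_left h, max_eq_left h', abs_neg, abs_of_nonneg hR]
    rw [abs_of_nonpos (by linarith)]; linarith
  · rw [min_eq_right h, max_eq_right (by linarith), abs_of_nonneg hR]
    exact h.trans (le_abs_self x)
  · have : R = 0 := by linarith
    subst this; simp

/-- a-priori growth bound -/
lemma growth {X : ℝ × ℝ → ℝ × ℝ} {A B : ℝ} (hA : 0 ≤ A) (hB : 0 ≤ B) {T : ℝ}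
    (hX : ∀ p, ‖X p‖ ≤ A * ‖p‖ + B) {α : ℝ → ℝ × ℝ}
    (hα : ∀ t ∈ Ioo (-(T+1)) (T+1), HasDerivAt α (X (α t)) t) {t : ℝ} (ht : t ∈ Icc (0:ℝ) T) :
    ‖α t‖ ≤ gronwallBound ‖α 0‖ A B T := by
  have h := norm_le_gronwallBound_of_norm_deriv_right_le (f := α) (f' := fun t => X (α t))
    (δ := ‖α 0‖) (K := A) (ε := B) (a := 0) (b := T)
    (fun s hs => (hα s ⟨by linarith [hs.1, hs.2], by linarith [hs.2]⟩).continuousAt.continuousWithinAt)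
    (fun s hs => (hα s ⟨by linarith [hs.1, hs.2], by linarith [hs.2]⟩).hasDerivWithinAt) le_rfl
    (fun s _ => hX _) t ht
  refine h.trans (gronwallBound_mono (norm_nonneg _) hB hA ?_)
  linarith [ht.2]

lemma exists_sol_T {X : ℝ × ℝ → ℝ × ℝ} {K : NNReal} (hX : LipschitzWith K X)
    (x0 : ℝ × ℝ) (T : ℝ) (hT : 0 < T) :
    ∃ α : ℝ → ℝ × ℝ, α 0 = x0 ∧ ∀ t ∈ Ioo (-T) T, HasDerivAt α (X (α t)) t := by
  set B := ‖X 0‖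
  set R := gronwallBound ‖x0‖ K B T with hR
  have hB : 0 ≤ B := norm_nonneg _
  have hgr : ∀ p, ‖X p‖ ≤ K * ‖p‖ + B := by
    intro p
    have h1 : ‖X p - X 0‖ ≤ K * ‖p - 0‖ := by
      simpa [dist_eq_norm] using hX.dist_le_mul p 0
    have h2 : ‖X p‖ ≤ ‖X p - X 0‖ + ‖X 0‖ := by
      simpa using norm_add_le (X p - X 0) (X 0)
    rw [sub_zero] at h1
    linarith
  have hR0 : 0 ≤ R := by
    have := gronwallBound_mono (norm_nonneg x0) hB K.coe_nonneg hT.le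
    rw [gronwallBound_x0] at this
    exact (norm_nonneg _).trans this
  set c : ℝ × ℝ → ℝ × ℝ := fun p => (cl (-R) R p.1, cl (-R) R p.2) with hc
  have hcl : LipschitzWith 1 c := by
    have h1 : LipschitzWith (1*1) (fun p : ℝ × ℝ => cl (-R) R p.1) :=
      (cl_lip _ _).comp LipschitzWith.prod_fst
    have h2 : LipschitzWith (1*1) (fun p : ℝ × ℝ => cl (-R) R p.2) :=
      (cl_lip _ _).comp LipschitzWith.prod_snd
    simpa using h1.prodMk h2
  have hcn : ∀ p, ‖c p‖ ≤ ‖p‖ := by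
    intro p
    simp only [hc, Prod.norm_def, Real.norm_eq_abs]
    exact max_le_max (cl_abs_le hR0 _) (cl_abs_le hR0 _)
  have hcR : ∀ p, ‖c p‖ ≤ R := by
    intro p
    simp only [hc, Prod.norm_def, Real.norm_eq_abs]
    exact max_le (abs_le.2 (cl_mem (by linarith) _)) (abs_le.2 (cl_mem (by linarith) _))
  have hcid : ∀ p, ‖p‖ ≤ R → c p = p := by
    intro p hp
    have h1 : |p.1| ≤ R := (norm_fst_le p).trans hp
    have h2 : |p.2| ≤ R := (norm_snd_le p).trans hp
    simp only [hc]
    rw [cl_of_mem (abs_le.1 h1), cl_of_mem (abs_le.1 h2)]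
  have hXc : LipschitzWith K (X ∘ c) := by simpa using hX.comp hcl
  have hbd : ∀ p, ‖(X ∘ c) p‖ ≤ ((K * R.toNNReal + B.toNNReal : NNReal) : ℝ) := by
    intro p
    refine (hgr _).trans ?_
    rw [NNReal.coe_add, NNReal.coe_mul, Real.coe_toNNReal _ hR0, Real.coe_toNNReal _ hB]
    have := mul_le_mul_of_nonneg_left (hcR p) K.coe_nonneg
    linarith
  have hgr' : ∀ p, ‖(X ∘ c) p‖ ≤ K * ‖p‖ + B := by
    intro p
    refine (hgr _).trans ?_
    have := mul_le_mul_of_nonneg_left (hcn p) K.coe_nonneg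
    linarith
  obtain ⟨α, h0, hα⟩ := exists_sol_bounded hXc hbd x0 (T+1) (by linarith)
  refine ⟨α, h0, fun t ht => ?_⟩
  have hn : ‖α t‖ ≤ R := by
    rcases le_total 0 t with h | h
    · have := growth K.coe_nonneg hB hgr' hα (t := t) ⟨h, ht.2.le⟩
      rwa [h0] at this
    · have hβ : ∀ s ∈ Ioo (-(T+1)) (T+1), HasDerivAt (fun s => α (-s))
          ((fun p => - (X ∘ c) p) (α (-s))) s := by
        intro s hs
        have := (hα (-s) ⟨by linarith [hs.2], by linarith [hs.1]⟩).scomp s (hasDerivAt_neg s)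
        simpa [Function.comp_def] using this
      have := growth (X := fun p => - (X ∘ c) p) K.coe_nonneg hB
        (fun p => by rw [norm_neg]; exact hgr' p) hβ (t := -t) ⟨by linarith, by linarith [ht.1]⟩
      simpa [h0] using this
  have := hα t ⟨by linarith [ht.1], by linarith [ht.2]⟩
  simpa [hcid _ hn] using this

lemma exists_sol_global {X : ℝ × ℝ → ℝ × ℝ} {K : NNReal} (hX : LipschitzWith K X)
    (x0 : ℝ × ℝ) :
    ∃ α : ℝ → ℝ × ℝ, α 0 = x0 ∧ ∀ t, HasDerivAt α (X (α t)) t := by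
  have key := fun n : ℝ => exists_sol_T hX x0 (|n|+1) (by positivity)
  choose a ha0 ha using key
  refine ⟨fun t => a t t, ha0 0, fun t => ?_⟩
  have hev : (fun s => a s s) =ᶠ[nhds t] a (|t|+1) := by
    have : ∀ᶠ s in nhds t, |s| < |t| + 1 :=
      (continuous_abs.tendsto t).eventually (gt_mem_nhds (by linarith))
    filter_upwards [this] with s hs
    have hu := ODE_solution_unique_of_mem_Ioo (v := fun _ => X) (s := fun _ => univ) (K := K)
      (a := -(|s|+1)) (b := |s|+1) (t₀ := 0) (f := a s) (g := a (|t|+1))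
      (fun _ _ => hX.lipschitzOnWith) ⟨by linarith [abs_nonneg s], by linarith [abs_nonneg s]⟩
      (fun r hr => ⟨ha s r hr, mem_univ _⟩)
      (fun r hr => ⟨ha _ r (by
        rw [abs_of_nonneg (by positivity : 0 ≤ |t|+1)]
        exact ⟨by linarith [hr.1], by linarith [hr.2]⟩), mem_univ _⟩) (by rw [ha0, ha0])
    exact hu ⟨by linarith [neg_abs_le s], by linarith [le_abs_self s]⟩
  have h1 := ha (|t|+1) t (by
    rw [abs_of_nonneg (by positivity : 0 ≤ |t|+1)]
    exact ⟨by linarith [neg_abs_le t], by linarith [le_abs_self t]⟩)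
  have h2 := h1.congr_of_eventuallyEq hev
  simpa [hev.eq_of_nhds] using h2

/-! ## Lienard form of planar systems `u' = w`, `w' = f(u) + g(u) w` -/

def GS (f g u w : ℝ → ℝ) : Prop :=
  ∀ z, HasDerivAt u (w z) z ∧ HasDerivAt w (f (u z) + g (u z) * w z) z

def SolOn (f g : ℝ → ℝ) (T : ℝ) (u w : ℝ → ℝ) : Prop :=
  ∀ z ∈ Icc 0 T, HasDerivAt u (w z) z ∧ HasDerivAt w (f (u z) + g (u z) * w z) z

def prim (g : ℝ → ℝ) (a x : ℝ) : ℝ := ∫ t in a..x, g t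

lemma prim_deriv {g : ℝ → ℝ} (hg : Continuous g) (a x : ℝ) : HasDerivAt (prim g a) (g x) x :=
  (hg.integral_hasStrictDerivAt a x).hasDerivAt

lemma prim_self (g : ℝ → ℝ) (a : ℝ) : prim g a a = 0 := by simp [prim]

lemma prim_lip {g : ℝ → ℝ} (hg : Continuous g) {M : NNReal} (hM : ∀ x, |g x| ≤ M) (a : ℝ) :
    LipschitzWith M (prim g a) := by
  apply lipschitzWith_of_nnnorm_deriv_le (fun x => (prim_deriv hg a x).differentiableAt)
  intro x
  rw [(prim_deriv hg a x).deriv]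
  exact_mod_cast (hM x)

def LX (f g : ℝ → ℝ) (a : ℝ) (p : ℝ × ℝ) : ℝ × ℝ := (p.2 + prim g a p.1, f p.1)

lemma LX_lip {f g : ℝ → ℝ} {L : NNReal} (hf : LipschitzWith L f) (hg : Continuous g) {M : NNReal}
    (hM : ∀ x, |g x| ≤ M) (a : ℝ) : LipschitzWith (max (1 + M * 1) (L * 1)) (LX f g a) := by
  unfold LX
  exact (LipschitzWith.prod_snd.add ((prim_lip hg hM a).comp LipschitzWith.prod_fst)).prodMk
    (hf.comp LipschitzWith.prod_fst)

lemma lienard_deriv {f g : ℝ → ℝ} (hg : Continuous g) (a : ℝ) {u w : ℝ → ℝ} {z : ℝ}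
    (h : HasDerivAt u (w z) z ∧ HasDerivAt w (f (u z) + g (u z) * w z) z) :
    HasDerivAt (fun z => ((u z, w z - prim g a (u z)) : ℝ × ℝ))
      (LX f g a (u z, w z - prim g a (u z))) z := by
  have h1 : HasDerivAt (fun z => w z - prim g a (u z)) (f (u z)) z := by
    exact (h.2.sub ((prim_deriv hg a (u z)).comp z h.1)).congr_deriv (by ring)
  have := h.1.prodMk h1
  simpa [LX] using this

lemma GS_exists {f g : ℝ → ℝ} {L : NNReal} (hf : LipschitzWith L f) (hg : Continuous g)
    {M : NNReal} (hM : ∀ x, |g x| ≤ M) (a d : ℝ) :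
    ∃ u w, GS f g u w ∧ u 0 = a ∧ w 0 = d := by
  obtain ⟨α, h0, hα⟩ := exists_sol_global (LX_lip hf hg hM a) (a, d)
  refine ⟨fun z => (α z).1, fun z => (α z).2 + prim g a (α z).1, fun z => ?_, by simp [h0],
    by simp [h0, prim_self]⟩
  have h1 : HasDerivAt (fun z => (α z).1) ((α z).2 + prim g a (α z).1) z := by
    have := (hα z).hasFDerivAt.fst.hasDerivAt
    simpa [LX] using this
  have h2 : HasDerivAt (fun z => (α z).2) (f (α z).1) z := by
    have := (hα z).hasFDerivAt.snd.hasDerivAt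
    simpa [LX] using this
  exact ⟨h1, h2.add ((prim_deriv hg a _).comp z h1)⟩

lemma SolOn_unique {f g : ℝ → ℝ} {L : NNReal} (hf : LipschitzWith L f) (hg : Continuous g)
    {M : NNReal} (hM : ∀ x, |g x| ≤ M) {T : ℝ} {u w u' w' : ℝ → ℝ}
    (h : SolOn f g T u w) (h' : SolOn f g T u' w') (h0 : u 0 = u' 0) (h1 : w 0 = w' 0) :
    ∀ z ∈ Icc 0 T, u z = u' z ∧ w z = w' z := by
  intro z hz
  have hu := ODE_solution_unique_of_mem_Icc_right (v := fun _ => LX f g 0) (s := fun _ => univ)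
    (a := 0) (b := T) (f := fun z => ((u z, w z - prim g 0 (u z)) : ℝ × ℝ))
    (g := fun z => ((u' z, w' z - prim g 0 (u' z)) : ℝ × ℝ))
    (fun _ _ => (LX_lip hf hg hM 0).lipschitzOnWith)
    (fun t ht => (lienard_deriv hg 0 (h t ht)).continuousAt.continuousWithinAt)
    (fun t ht => (lienard_deriv hg 0 (h t (Ico_subset_Icc_self ht))).hasDerivWithinAt)
    (fun _ _ => mem_univ _)
    (fun t ht => (lienard_deriv hg 0 (h' t ht)).continuousAt.continuousWithinAt)
    (fun t ht => (lienard_deriv hg 0 (h' t (Ico_subset_Icc_self ht))).hasDerivWithinAt)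
    (fun _ _ => mem_univ _) (by simp [h0, h1]) hz
  simp only [Prod.mk.injEq] at hu
  obtain ⟨e1, e2⟩ := hu
  rw [e1] at e2
  exact ⟨e1, by linarith⟩

lemma GS.reverse {f g u w : ℝ → ℝ} (h : GS f g u w) :
    GS f (fun x => - g x) (fun z => u (-z)) (fun z => - w (-z)) := by
  intro z
  have h1 := (h (-z)).1.scomp z (hasDerivAt_neg z)
  have h2 := ((h (-z)).2.scomp z (hasDerivAt_neg z)).neg
  refine ⟨by simpa [Function.comp_def] using h1, ?_⟩
  exact h2.congr_deriv (by simp)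

lemma GS.shift {f g u w : ℝ → ℝ} (h : GS f g u w) (Z : ℝ) :
    GS f g (fun z => u (z + Z)) (fun z => w (z + Z)) := by
  intro z
  exact ⟨(h (z+Z)).1.comp_add_const z Z, (h (z+Z)).2.comp_add_const z Z⟩

lemma GS.solOn {f g u w : ℝ → ℝ} (h : GS f g u w) (T : ℝ) : SolOn f g T u w := fun z _ => h z

lemma GS_unique0 {f g : ℝ → ℝ} {L : NNReal} (hf : LipschitzWith L f) (hg : Continuous g)
    {M : NNReal} (hM : ∀ x, |g x| ≤ M) {u w u' w' : ℝ → ℝ}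
    (h : GS f g u w) (h' : GS f g u' w') (h0 : u 0 = u' 0) (h1 : w 0 = w' 0) :
    ∀ z, u z = u' z ∧ w z = w' z := by
  intro z
  rcases le_total 0 z with hz | hz
  · exact SolOn_unique hf hg hM (h.solOn z) (h'.solOn z) h0 h1 z ⟨hz, le_rfl⟩
  · have := SolOn_unique hf (g := fun x => - g x) hg.neg (fun x => by rw [abs_neg]; exact hM x) (h.reverse.solOn (-z))
      (h'.reverse.solOn (-z)) (by simpa using h0) (by simpa using h1) (-z) ⟨by linarith, le_rfl⟩
    simpa using this

lemma GS_unique {f g : ℝ → ℝ} {L : NNReal} (hf : LipschitzWith L f) (hg : Continuous g)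
    {M : NNReal} (hM : ∀ x, |g x| ≤ M) {u w u' w' : ℝ → ℝ}
    (h : GS f g u w) (h' : GS f g u' w') (t : ℝ) (h0 : u t = u' t) (h1 : w t = w' t) :
    ∀ z, u z = u' z ∧ w z = w' z := by
  intro z
  have := GS_unique0 hf hg hM (h.shift t) (h'.shift t) (by simpa using h0) (by simpa using h1)
    (z - t)
  simpa using this

lemma GS.continuous_u {f g u w : ℝ → ℝ} (h : GS f g u w) : Continuous u :=
  continuous_iff_continuousAt.2 fun z => (h z).1.continuousAt

lemma GS.continuous_w {f g u w : ℝ → ℝ} (h : GS f g u w) : Continuous w :=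
  continuous_iff_continuousAt.2 fun z => (h z).2.continuousAt

lemma GS_dep {f g : ℝ → ℝ} {L : NNReal} (hf : LipschitzWith L f) (hg : Continuous g)
    {M : NNReal} (hM : ∀ x, |g x| ≤ M) {u w : ℝ → ℝ} (h : GS f g u w) (T : ℝ) {η : ℝ} (hη : 0 < η) :
    ∃ ε > 0, ∀ g' : ℝ → ℝ, Continuous g' → (∀ x, |g' x - g x| ≤ ε) →
      ∀ u' w', GS f g' u' w' → u' 0 = u 0 → w' 0 = w 0 →
      ∀ z ∈ Icc 0 T, |u' z - u z| < η ∧ |w' z - w z| < η := by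
  set a := u 0 with ha
  obtain ⟨C, hC⟩ := (isCompact_Icc (a := (0:ℝ)) (b := T)).exists_bound_of_continuousOn
    (f := fun z => u z - a) (h.continuous_u.sub continuous_const).continuousOn
  set K : NNReal := max (1 + (M+1) * 1) (L * 1) with hK
  have hcont : Continuous (fun ε : ℝ => (M + 2) * gronwallBound 0 K (ε * C + 0) T + ε * C) := by
    have := (gronwallBound_continuous_ε 0 K T).comp (f := fun ε : ℝ => ε * C + 0) (by fun_prop)
    simp only [Function.comp_def] at this
    fun_prop
  have h0 : (M + 2) * gronwallBound 0 K ((0:ℝ) * C + 0) T + (0:ℝ) * C < η := by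
    simp [gronwallBound_ε0_δ0, hη]
  have hev := (hcont.tendsto 0).eventually (gt_mem_nhds h0)
  obtain ⟨r, hr, hball⟩ := Metric.eventually_nhds_iff.1 hev
  refine ⟨min (r/2) 1, by positivity, fun g' hg' hgg u' w' h' e0 e1 z hz => ?_⟩
  set ε := min (r/2) 1 with hε
  have hεpos : 0 < ε := by positivity
  have hlt := hball (y := ε) (by
    rw [Real.dist_eq, sub_zero, abs_of_pos hεpos]
    exact (min_le_left _ _).trans_lt (by linarith))
  have hM' : ∀ x, |g' x| ≤ ((M + 1 : NNReal) : ℝ) := by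
    intro x
    have h1 := hgg x
    have h2 := hM x
    have h3 : |g' x| ≤ |g' x - g x| + |g x| := by
      simpa using abs_add_le (g' x - g x) (g x)
    have h4 : ε ≤ 1 := min_le_right _ _
    push_cast
    linarith
  have hpr : ∀ x, |prim g' a x - prim g a x| ≤ ε * |x - a| := by
    intro x
    have : prim g' a x - prim g a x = ∫ t in a..x, (g' t - g t) := by
      unfold prim
      rw [intervalIntegral.integral_sub (hg'.intervalIntegrable _ _) (hg.intervalIntegrable _ _)]
    rw [this]
    exact intervalIntegral.norm_integral_le_of_norm_le_const (f := fun t => g' t - g t)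
      (fun t _ => hgg t)
  have hz' : ∀ t ∈ Icc 0 T, ε * |u t - a| ≤ ε * C := fun t ht =>
    mul_le_mul_of_nonneg_left (hC t ht) hεpos.le
  have hgw := dist_le_of_approx_trajectories_ODE (v := fun _ => LX f g' a) (K := K)
    (a := 0) (b := T) (f := fun z => ((u z, w z - prim g a (u z)) : ℝ × ℝ))
    (g := fun z => ((u' z, w' z - prim g' a (u' z)) : ℝ × ℝ))
    (f' := fun z => LX f g a (u z, w z - prim g a (u z)))
    (g' := fun z => LX f g' a (u' z, w' z - prim g' a (u' z)))
    (εf := ε * C) (εg := 0) (δ := 0)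
    (fun _ => LX_lip hf hg' hM' a)
    (fun t ht => (lienard_deriv hg a (h t)).continuousAt.continuousWithinAt)
    (fun t ht => (lienard_deriv hg a (h t)).hasDerivWithinAt)
    (fun t ht => by
      refine le_trans ?_ (hz' t (Ico_subset_Icc_self ht))
      refine le_trans ?_ (hpr (u t))
      simp only [LX, Prod.dist_eq, dist_self, Real.dist_eq]
      apply max_le _ (abs_nonneg _)
      rw [abs_sub_comm]
      apply le_of_eq; congr 1; ring)
    (fun t ht => (lienard_deriv hg' a (h' t)).continuousAt.continuousWithinAt)
    (fun t ht => (lienard_deriv hg' a (h' t)).hasDerivWithinAt)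
    (fun t ht => by simp)
    (by simp [e0, e1, ← ha, prim_self]) z hz
  have hCpos : 0 ≤ C := (norm_nonneg _).trans (hC z hz)
  have hmono := gronwallBound_mono (δ := 0) (K := K) (ε := ε * C + 0) le_rfl (by positivity)
    K.coe_nonneg (show z - 0 ≤ T by linarith [hz.2])
  set D := gronwallBound 0 K (ε * C + 0) T with hD
  have hd := hgw.trans hmono
  rw [Prod.dist_eq] at hd
  have hd1 : |u z - u' z| ≤ D := (le_max_left _ _).trans hd
  have hd2 : |w z - prim g a (u z) - (w' z - prim g' a (u' z))| ≤ D := (le_max_right _ _).trans hd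
  have hD0 : 0 ≤ D := (abs_nonneg _).trans hd1
  have hl : |prim g' a (u' z) - prim g' a (u z)| ≤ (M + 1) * D := by
    have h1 := (prim_lip hg' hM' a).dist_le_mul (u' z) (u z)
    rw [Real.dist_eq, Real.dist_eq] at h1
    push_cast at h1
    refine h1.trans (mul_le_mul_of_nonneg_left ?_ (by positivity))
    rwa [abs_sub_comm]
  have hp := (hpr (u z)).trans (hz' z hz)
  have hM0 := M.coe_nonneg
  have hεC : 0 ≤ ε * C := by positivity
  constructor
  · rw [abs_sub_comm]
    nlinarith [mul_nonneg hM0 hD0]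
  · have : |w' z - w z| ≤ D + (M+1) * D + ε * C := by
      rw [abs_le] at *
      constructor <;> linarith [hd2.1, hd2.2, hl.1, hl.2, hp.1, hp.2]
    nlinarith [mul_nonneg hM0 hD0]

/-! ## Calculus helpers -/

lemma sign_near {w : ℝ → ℝ} {d t : ℝ} (h : HasDerivAt w d t) (h0 : w t = 0) (hd : 0 < d) :
    ∃ ε > 0, ∀ z, |z - t| ≤ ε → (t < z → 0 < w z) ∧ (z < t → w z < 0) := by
  have h1 := (hasDerivAt_iff_tendsto_slope.1 h).eventually (lt_mem_nhds hd)
  rw [eventually_nhdsWithin_iff] at h1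
  obtain ⟨r, hr, hb⟩ := Metric.eventually_nhds_iff.1 h1
  refine ⟨r/2, by positivity, fun z hz => ?_⟩
  have hz' : dist z t < r := by rw [Real.dist_eq]; linarith
  constructor
  · intro hlt
    have := hb hz' (ne_of_gt hlt)
    rw [slope_def_field, h0, sub_zero] at this
    by_contra hc
    have : w z / (z - t) ≤ 0 := div_nonpos_of_nonpos_of_nonneg (not_lt.1 hc) (by linarith)
    linarith
  · intro hlt
    have := hb hz' (ne_of_lt hlt)
    rw [slope_def_field, h0, sub_zero] at this
    by_contra hc
    have : w z / (z - t) ≤ 0 := div_nonpos_of_nonneg_of_nonpos (not_lt.1 hc) (by linarith)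
    linarith

lemma grow_lin {v d : ℝ → ℝ} {Z m : ℝ} (h : ∀ z ≥ Z, HasDerivAt v (d z) z ∧ m ≤ d z) :
    ∀ z ≥ Z, v Z + m * (z - Z) ≤ v z := by
  intro z hz
  have := (convex_Ici Z).mul_sub_le_image_sub_of_le_deriv (f := v) (C := m)
    (fun t ht => (h t ht).1.continuousAt.continuousWithinAt)
    (fun t ht => (h t (interior_subset ht)).1.differentiableAt.differentiableWithinAt)
    (fun t ht => by
      rw [(h t (interior_subset ht)).1.deriv]; exact (h t (interior_subset ht)).2)
    Z self_mem_Ici z hz hz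
  linarith

lemma tendsto_top_of_deriv {v d : ℝ → ℝ} {m : ℝ} (hm : 0 < m)
    (h : ∀ᶠ z in atTop, HasDerivAt v (d z) z ∧ m ≤ d z) : Tendsto v atTop atTop := by
  obtain ⟨Z, hZ⟩ := eventually_atTop.1 h
  refine tendsto_atTop_mono' atTop (f₁ := fun z => v Z + m * (z - Z)) ?_ ?_
  · filter_upwards [eventually_ge_atTop Z] with z hz using grow_lin hZ z hz
  · apply tendsto_atTop_add_const_left
    apply Tendsto.const_mul_atTop hm
    exact tendsto_atTop_add_const_right _ _ tendsto_id

lemma mono_of_w {f g u w : ℝ → ℝ} (h : GS f g u w) {T0 T : ℝ} (hw : ∀ z ∈ Ioo T0 T, 0 < w z) :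
    StrictMonoOn u (Icc T0 T) := by
  apply strictMonoOn_of_deriv_pos (convex_Icc _ _) h.continuous_u.continuousOn
  intro z hz
  rw [interior_Icc] at hz
  rw [(h z).1.deriv]
  exact hw z hz

/-- antitone energy -/
lemma energy_deriv {f g u w : ℝ → ℝ} (h : GS f g u w) (hf : Continuous f) (a z : ℝ) :
    HasDerivAt (fun z => w z ^ 2 / 2 - prim f a (u z)) (g (u z) * w z ^ 2) z := by
  have h1 := (((h z).2.pow 2).div_const 2).sub ((prim_deriv hf a (u z)).comp z (h z).1)
  exact h1.congr_deriv (by norm_num; ring)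

lemma energy_mono {f g u w : ℝ → ℝ} (h : GS f g u w) (hf : Continuous f) (a : ℝ) {T0 T : ℝ}
    (hT : T0 ≤ T) (hg : ∀ z ∈ Ioo T0 T, 0 ≤ g (u z)) :
    w T0 ^ 2 / 2 - prim f a (u T0) ≤ w T ^ 2 / 2 - prim f a (u T) := by
  refine monotoneOn_of_deriv_nonneg (convex_Icc T0 T)
    (f := fun z => w z ^ 2 / 2 - prim f a (u z))
    (fun z _ => (energy_deriv h hf a z).continuousAt.continuousWithinAt)
    (fun z _ => (energy_deriv h hf a z).differentiableAt.differentiableWithinAt) ?_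
    (left_mem_Icc.2 hT) (right_mem_Icc.2 hT) hT
  intro z hz
  rw [interior_Icc] at hz
  rw [(energy_deriv h hf a z).deriv]
  exact mul_nonneg (hg z hz) (sq_nonneg _)

lemma energy_anti {f g u w : ℝ → ℝ} (h : GS f g u w) (hf : Continuous f) (a : ℝ) {T0 T : ℝ}
    (hT : T0 ≤ T) (hg : ∀ z ∈ Ioo T0 T, g (u z) ≤ 0) :
    w T ^ 2 / 2 - prim f a (u T) ≤ w T0 ^ 2 / 2 - prim f a (u T0) := by
  refine antitoneOn_of_deriv_nonpos (convex_Icc T0 T)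
    (f := fun z => w z ^ 2 / 2 - prim f a (u z))
    (fun z _ => (energy_deriv h hf a z).continuousAt.continuousWithinAt)
    (fun z _ => (energy_deriv h hf a z).differentiableAt.differentiableWithinAt) ?_
    (left_mem_Icc.2 hT) (right_mem_Icc.2 hT) hT
  intro z hz
  rw [interior_Icc] at hz
  rw [(energy_deriv h hf a z).deriv]
  exact mul_nonpos_of_nonpos_of_nonneg (hg z hz) (sq_nonneg _)

/-! ## The abstract setup -/

structure Setup (F : ℝ → ℝ) (q u0 b : ℝ) : Prop where
  hq : q < u0
  hb : u0 < b
  lip : ∀ s, q ≤ s → s < b → ∃ L : NNReal, LipschitzOnWith L F (Icc q s)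
  pos : ∀ x ∈ Ico q u0, 0 < F x
  zero : F u0 = 0
  neg : ∀ x ∈ Ioo u0 b, F x < 0
  lin : ∃ k > 0, ∃ δ > 0, ∀ x ∈ Ioo (u0 - δ) u0, k * (u0 - x) ≤ F x

/-- composition with the clamp -/
def cc (H : ℝ → ℝ) (q s : ℝ) : ℝ → ℝ := fun x => H (cl q s x)

lemma cc_of_mem {H : ℝ → ℝ} {q s x : ℝ} (h : x ∈ Icc q s) : cc H q s x = H x := by
  unfold cc; rw [cl_of_mem h]

lemma Setup.cc_lip {F : ℝ → ℝ} {q u0 b : ℝ} (S : Setup F q u0 b) {s : ℝ} (h1 : q ≤ s) (h2 : s < b) :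
    ∃ L : NNReal, LipschitzWith L (cc F q s) := by
  obtain ⟨L, hL⟩ := S.lip s h1 h2
  refine ⟨L * 1, ?_⟩
  rw [← lipschitzOnWith_univ]
  exact hL.comp ((cl_lip q s).lipschitzOnWith) (fun x _ => cl_mem h1 x)

lemma cc_cont {G : ℝ → ℝ} {q b s : ℝ} (hG : ContinuousOn G (Ico q b)) (h1 : q ≤ s) (h2 : s < b) :
    Continuous (cc G q s) :=
  hG.comp_continuous (cl_cont q s) (fun x => ⟨(cl_mem h1 x).1, (cl_mem h1 x).2.trans_lt h2⟩)

lemma cc_bdd {G : ℝ → ℝ} {q b s : ℝ} (hG : ContinuousOn G (Ico q b)) (h1 : q ≤ s) (h2 : s < b) :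
    ∃ M : NNReal, ∀ x, |cc G q s x| ≤ M := by
  obtain ⟨C, hC⟩ := (isCompact_Icc (a := q) (b := s)).exists_bound_of_continuousOn
    (hG.mono (fun x hx => ⟨hx.1, hx.2.trans_lt h2⟩))
  refine ⟨C.toNNReal, fun x => (hC _ (cl_mem h1 x)).trans (Real.le_coe_toNNReal C)⟩

def RT (u w : ℝ → ℝ) (s : ℝ) : Prop := ∃ T > 0, u T = s ∧ ∀ z ∈ Ioc 0 T, 0 < w z

def Can (F G : ℝ → ℝ) (q s : ℝ) (u w : ℝ → ℝ) : Prop :=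
  GS (cc F q s) (cc G q s) u w ∧ u 0 = q ∧ w 0 = 0

/-- the upper orbit through `(q,0)` reaches the line `u = s`. -/
def R (F : ℝ → ℝ) (q : ℝ) (G : ℝ → ℝ) (s : ℝ) : Prop := ∃ u w, Can F G q s u w ∧ RT u w s

lemma Setup.can {F : ℝ → ℝ} {q u0 b : ℝ} (S : Setup F q u0 b) {G : ℝ → ℝ}
    (hG : ContinuousOn G (Ico q b)) {s : ℝ} (h1 : q ≤ s) (h2 : s < b) : ∃ u w, Can F G q s u w := by
  obtain ⟨L, hL⟩ := S.cc_lip h1 h2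
  obtain ⟨M, hM⟩ := cc_bdd hG h1 h2
  exact GS_exists hL (cc_cont hG h1 h2) hM q 0

lemma range_RT {f g u w : ℝ → ℝ} (h : GS f g u w) {q T : ℝ} (h0 : u 0 = q)
    (hw : ∀ z ∈ Ioo 0 T, 0 < w z) : ∀ z ∈ Icc 0 T, u z ∈ Icc q (u T) := by
  intro z hz
  have hm := (mono_of_w h hw).monotoneOn
  have hT : 0 ≤ T := hz.1.trans hz.2
  exact ⟨by rw [← h0]; exact hm (left_mem_Icc.2 hT) hz hz.1, hm hz (right_mem_Icc.2 hT) hz.2⟩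

lemma solOn_change {F G : ℝ → ℝ} {q s s' T : ℝ} {u w : ℝ → ℝ}
    (h : GS (cc F q s) (cc G q s) u w) (hr : ∀ z ∈ Icc 0 T, u z ∈ Icc q s ∧ u z ∈ Icc q s') :
    SolOn (cc F q s') (cc G q s') T u w := by
  intro z hz
  have := h z
  rw [cc_of_mem (hr z hz).1, cc_of_mem (hr z hz).1] at this
  rw [cc_of_mem (hr z hz).2, cc_of_mem (hr z hz).2]
  exact this

/-- two canonical solutions with different clamps agree while in the smaller range -/
lemma Setup.can_agree {F : ℝ → ℝ} {q u0 b : ℝ} (S : Setup F q u0 b) {G : ℝ → ℝ}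
    (hG : ContinuousOn G (Ico q b)) {s s' T : ℝ} (h1 : q ≤ s') (h2 : s' < b) {u w u' w' : ℝ → ℝ}
    (h : Can F G q s u w) (h' : Can F G q s' u' w')
    (hr : ∀ z ∈ Icc 0 T, u z ∈ Icc q s ∧ u z ∈ Icc q s') :
    ∀ z ∈ Icc 0 T, u z = u' z ∧ w z = w' z := by
  obtain ⟨L, hL⟩ := S.cc_lip h1 h2
  obtain ⟨M, hM⟩ := cc_bdd hG h1 h2
  exact SolOn_unique hL (cc_cont hG h1 h2) hM (solOn_change h.1 hr) (h'.1.solOn T)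
    (by rw [h.2.1, h'.2.1]) (by rw [h.2.2, h'.2.2])

lemma Setup.RT_change {F : ℝ → ℝ} {q u0 b : ℝ} (S : Setup F q u0 b) {G : ℝ → ℝ}
    (hG : ContinuousOn G (Ico q b)) {s s1 s' : ℝ} (hs : s ≤ s1) (hs' : s ≤ s')
    (h1 : q ≤ s') (h2 : s' < b) {u w u' w' : ℝ → ℝ}
    (h : Can F G q s1 u w) (h' : Can F G q s' u' w') (hR : RT u w s) : RT u' w' s := by
  obtain ⟨T, hT, hu, hw⟩ := hR
  have hr := range_RT h.1 h.2.1 (T := T) (fun z hz => hw z (Ioo_subset_Ioc_self hz))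
  rw [hu] at hr
  have := S.can_agree hG h1 h2 h h' (T := T)
    (fun z hz => ⟨⟨(hr z hz).1, (hr z hz).2.trans hs⟩, ⟨(hr z hz).1, (hr z hz).2.trans hs'⟩⟩)
  refine ⟨T, hT, ?_, fun z hz => ?_⟩
  · rw [← (this T ⟨hT.le, le_rfl⟩).1, hu]
  · rw [← (this z (Ioc_subset_Icc_self hz)).2]; exact hw z hz

lemma Setup.R_iff {F : ℝ → ℝ} {q u0 b : ℝ} (S : Setup F q u0 b) {G : ℝ → ℝ}
    (hG : ContinuousOn G (Ico q b)) {s s' : ℝ} (h0 : q ≤ s) (hs' : s ≤ s')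
    (h2 : s' < b) {u w : ℝ → ℝ} (h : Can F G q s' u w) : R F q G s ↔ RT u w s := by
  constructor
  · rintro ⟨u1, w1, hc, hR⟩
    exact S.RT_change hG le_rfl hs' (h0.trans hs') h2 hc h hR
  · intro hR
    obtain ⟨u1, w1, hc⟩ := S.can hG h0 (hs'.trans_lt h2)
    exact ⟨u1, w1, hc, S.RT_change hG hs' le_rfl h0 (hs'.trans_lt h2) h hc hR⟩

/-- reaching a point below -/
lemma RT_lower {f g u w : ℝ → ℝ} (h : GS f g u w) {q T s : ℝ} (h0 : u 0 = q) (hT : 0 < T)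
    (hw : ∀ z ∈ Ioo 0 T, 0 < w z) (hqs : q < s) (hs : s < u T) : RT u w s := by
  have := intermediate_value_Ioo hT.le h.continuous_u.continuousOn
  rw [h0] at this
  obtain ⟨T', hT', e⟩ := this ⟨hqs, hs⟩
  exact ⟨T', hT'.1, e, fun z hz => hw z ⟨hz.1, hz.2.trans_lt hT'.2⟩⟩

lemma Setup.R_lower {F : ℝ → ℝ} {q u0 b : ℝ} (S : Setup F q u0 b) {G : ℝ → ℝ}
    (hG : ContinuousOn G (Ico q b)) {s s' : ℝ} (h0 : q < s) (hs' : s ≤ s')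
    (h2 : s' < b) (hR : R F q G s') : R F q G s := by
  rcases hs'.eq_or_lt with e | hlt
  · rwa [e]
  · obtain ⟨u, w, hc, T, hT, hu, hw⟩ := hR
    rw [S.R_iff hG h0.le hs' h2 hc]
    exact RT_lower hc.1 hc.2.1 hT (fun z hz => hw z (Ioo_subset_Ioc_self hz)) h0 (by rwa [hu])

lemma Setup.start_pos {F : ℝ → ℝ} {q u0 b : ℝ} (S : Setup F q u0 b) {G : ℝ → ℝ}
    {s : ℝ} (h1 : q ≤ s) {u w : ℝ → ℝ} (h : Can F G q s u w) :
    ∃ ε > 0, ∀ z ∈ Ioc 0 ε, 0 < w z := by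
  have hd := (h.1 0).2
  rw [h.2.2, mul_zero, add_zero, h.2.1, cc_of_mem ⟨le_rfl, h1⟩] at hd
  obtain ⟨ε, hε, hb⟩ := sign_near hd h.2.2 (S.pos q ⟨le_rfl, S.hq⟩)
  refine ⟨ε, hε, fun z hz => (hb z ?_).1 hz.1⟩
  rw [sub_zero, abs_of_pos hz.1]; exact hz.2

def Hit (u w : ℝ → ℝ) (u0 s : ℝ) : Prop :=
  ∃ T > 0, w T = 0 ∧ (∀ z ∈ Ioo 0 T, 0 < w z) ∧ u T ∈ Ioc u0 s

def Over (u w : ℝ → ℝ) (u0 : ℝ) : Prop :=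
  (∀ z > 0, 0 < w z ∧ u z < u0) ∧ Tendsto u atTop (nhds u0) ∧ Tendsto w atTop (nhds 0)

lemma Setup.alt {F : ℝ → ℝ} {q u0 b : ℝ} (S : Setup F q u0 b) {G : ℝ → ℝ}
    (hG : ContinuousOn G (Ico q b)) {s : ℝ} (h0 : u0 ≤ s)
    (h2 : s < b) {u w : ℝ → ℝ} (h : Can F G q s u w) (hR : ¬ R F q G s) :
    Hit u w u0 s ∨ Over u w u0 := by
  have hqs : q < s := S.hq.trans_le h0
  rw [S.R_iff hG hqs.le le_rfl h2 h] at hR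
  obtain ⟨L, hL⟩ := S.cc_lip hqs.le h2
  obtain ⟨M, hM⟩ := cc_bdd hG hqs.le h2
  have hGc := cc_cont hG hqs.le h2
  by_cases hall : ∀ z > 0, 0 < w z
  · right
    have hlt : ∀ z > 0, u z < s := by
      intro z hz
      by_contra hc
      rcases (not_lt.1 hc).eq_or_lt with e | hlt
      · exact hR ⟨z, hz, e.symm, fun t ht => hall t ht.1⟩
      · exact hR (RT_lower h.1 h.2.1 hz (fun t ht => hall t ht.1) hqs hlt)
    have hsm : StrictMonoOn u (Ici 0) := by
      intro x hx y hy hxy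
      exact mono_of_w h.1 (T0 := 0) (T := y) (fun z hz => hall z hz.1) ⟨hx, hxy.le⟩
        ⟨hy, le_rfl⟩ hxy
    have hgt : ∀ z > 0, q < u z := by
      intro z hz
      rw [← h.2.1]; exact hsm (mem_Ici.2 le_rfl) (mem_Ici.2 (le_of_lt hz)) hz
    have hmm : Monotone (fun z => u (max z 0)) := fun x y hxy =>
      hsm.monotoneOn (mem_Ici.2 (le_max_right _ _)) (mem_Ici.2 (le_max_right _ _))
        (max_le_max hxy le_rfl)
    have hlim : ∃ l, Tendsto u atTop (nhds l) := by
      have hev : (fun z => u (max z 0)) =ᶠ[atTop] u := by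
        filter_upwards [eventually_ge_atTop 0] with z hz
        rw [max_eq_left hz]
      rcases tendsto_atTop_of_monotone hmm with ht | ⟨l, hl⟩
      · exfalso
        obtain ⟨z, hz, hz'⟩ := ((ht.congr' hev).eventually (eventually_ge_atTop s)).and
          (eventually_gt_atTop 0) |>.exists
        exact absurd (hlt z hz') (not_lt.2 hz)
      · exact ⟨l, hl.congr' hev⟩
    obtain ⟨l, hl⟩ := hlim
    have hls : l ≤ s := le_of_tendsto hl (by
      filter_upwards [eventually_gt_atTop 0] with z hz using (hlt z hz).le)
    have hul : ∀ z > 0, u z < l := by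
      intro z hz
      have : u (z+1) ≤ l := ge_of_tendsto hl (by
        filter_upwards [eventually_ge_atTop (z+1)] with t ht
        exact hsm.monotoneOn (mem_Ici.2 (by linarith)) (mem_Ici.2 (by linarith)) ht)
      exact (hsm (mem_Ici.2 (by linarith)) (mem_Ici.2 (by linarith)) (by linarith)).trans_le this
    have hlq : q < l := (hgt 1 one_pos).trans (hul 1 one_pos)
    set y := fun z => w z - prim (cc G q s) 0 (u z) with hy
    have hyd : ∀ z, HasDerivAt y (cc F q s (u z)) z := by
      intro z
      exact ((h.1 z).2.sub ((prim_deriv hGc 0 (u z)).comp z (h.1 z).1)).congr_deriv (by ring)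
    have hPl : Tendsto (fun z => prim (cc G q s) 0 (u z)) atTop (nhds (prim (cc G q s) 0 l)) :=
      ((prim_deriv hGc 0 l).continuousAt.tendsto).comp hl
    have hFl : Tendsto (fun z => cc F q s (u z)) atTop (nhds (F l)) := by
      have := (hL.continuous.tendsto l).comp hl
      rwa [cc_of_mem ⟨hlq.le, hls⟩] at this
    have hnotop : ¬ Tendsto y atTop atTop := by
      intro hyt
      have hwt : Tendsto w atTop atTop := by
        have := hyt.atTop_add hPl
        simpa [hy] using this
      have hut : Tendsto u atTop atTop := tendsto_top_of_deriv (d := w) one_pos (by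
        filter_upwards [hwt.eventually (eventually_ge_atTop 1)] with z hz
        exact ⟨(h.1 z).1, hz⟩)
      exact not_tendsto_nhds_of_tendsto_atTop hut l hl
    have hFz : F l = 0 := by
      rcases lt_trichotomy (F l) 0 with hn | hz | hp
      · exfalso
        have hyt : Tendsto (fun z => - y z) atTop atTop :=
          tendsto_top_of_deriv (d := fun z => - cc F q s (u z)) (m := - F l / 2) (by linarith) (by
            filter_upwards [hFl.eventually (gt_mem_nhds (show F l < F l / 2 by linarith))] with z hz
            exact ⟨(hyd z).neg, by linarith⟩)
        have hwt : Tendsto (fun z => - w z) atTop atTop := by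
          have := hyt.atTop_add hPl.neg
          refine this.congr (fun z => ?_)
          simp only [hy]; ring
        obtain ⟨z, hz, hz'⟩ := (hwt.eventually (eventually_ge_atTop 0)).and
          (eventually_gt_atTop 0) |>.exists
        linarith [hall z hz']
      · exact hz
      · exfalso
        exact hnotop (tendsto_top_of_deriv (d := fun z => cc F q s (u z)) (m := F l / 2)
          (by linarith) (by
            filter_upwards [hFl.eventually (lt_mem_nhds (show F l / 2 < F l by linarith))] with z hz
            exact ⟨hyd z, hz.le⟩))
    have hl0 : l = u0 := by
      rcases lt_trichotomy l u0 with h' | h' | h'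
      · linarith [S.pos l ⟨hlq.le, h'⟩]
      · exact h'
      · linarith [S.neg l ⟨h', hls.trans_lt h2⟩]
    subst hl0
    refine ⟨fun z hz => ⟨hall z hz, hul z hz⟩, hl, ?_⟩
    have hymono : Monotone (fun z => y (max z 0)) := by
      have hyy : MonotoneOn y (Ici 0) := by
        apply monotoneOn_of_deriv_nonneg (convex_Ici 0)
          (fun z _ => (hyd z).continuousAt.continuousWithinAt)
          (fun z _ => (hyd z).differentiableAt.differentiableWithinAt)
        intro z hz
        rw [interior_Ici] at hz
        rw [(hyd z).deriv, cc_of_mem ⟨(hgt z hz).le, (hlt z hz).le⟩]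
        exact (S.pos _ ⟨(hgt z hz).le, hul z hz⟩).le
      exact fun x y' hxy => hyy (mem_Ici.2 (le_max_right _ _)) (mem_Ici.2 (le_max_right _ _))
        (max_le_max hxy le_rfl)
    have hev : (fun z => y (max z 0)) =ᶠ[atTop] y := by
      filter_upwards [eventually_ge_atTop 0] with z hz
      rw [max_eq_left hz]
    rcases tendsto_atTop_of_monotone hymono with ht | ⟨m, hm⟩
    · exact absurd (ht.congr' hev) hnotop
    · have hwm := (hm.congr' hev).add hPl
      have hwm' : Tendsto w atTop (nhds (m + prim (cc G q s) 0 l)) := by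
        refine hwm.congr (fun z => ?_)
        simp [hy]
      set W := m + prim (cc G q s) 0 l
      have hW0 : 0 ≤ W := ge_of_tendsto hwm' (by
        filter_upwards [eventually_gt_atTop 0] with z hz using (hall z hz).le)
      rcases hW0.eq_or_lt with e | hWp
      · rwa [← e] at hwm'
      · exfalso
        have hut : Tendsto u atTop atTop := tendsto_top_of_deriv (d := w) (m := W/2)
          (by linarith) (by
          filter_upwards [hwm'.eventually (lt_mem_nhds (show W/2 < W by linarith))] with z hz
          exact ⟨(h.1 z).1, hz.le⟩)
        exact not_tendsto_nhds_of_tendsto_atTop hut l hl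
  · left
    push Not at hall
    obtain ⟨z1, hz1, hw1⟩ := hall
    obtain ⟨ε, hε, hεw⟩ := S.start_pos hqs.le h
    have hcomp : IsCompact (Icc ε z1 ∩ {z | w z ≤ 0}) :=
      isCompact_Icc.inter_right (isClosed_le h.1.continuous_w continuous_const)
    have hne : (Icc ε z1 ∩ {z | w z ≤ 0}).Nonempty := by
      refine ⟨z1, ⟨?_, le_rfl⟩, hw1⟩
      by_contra hc
      linarith [hεw z1 ⟨hz1, (not_le.1 hc).le⟩]
    obtain ⟨T, hT, hTl⟩ := hcomp.exists_isLeast hne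
    have hT0 : 0 < T := lt_of_lt_of_le hε hT.1.1
    have hpos : ∀ z ∈ Ioo 0 T, 0 < w z := by
      intro z hz
      by_contra hc
      rcases le_total z ε with hle | hle
      · exact hc (hεw z ⟨hz.1, hle⟩)
      · have := hTl ⟨⟨hle, hz.2.le.trans hT.1.2⟩, not_lt.1 hc⟩
        linarith [hz.2]
    have hwT : w T = 0 := by
      apply le_antisymm hT.2
      have hcl : T ∈ closure (Ioo 0 T) := by
        rw [closure_Ioo hT0.ne]; exact ⟨hT0.le, le_rfl⟩
      exact closure_minimal (s := Ioo 0 T) (t := {z | 0 ≤ w z}) (fun z hz => (hpos z hz).le)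
        (isClosed_le continuous_const h.1.continuous_w) hcl
    have huTs : u T ≤ s := by
      by_contra hc
      exact hR (RT_lower h.1 h.2.1 hT0 hpos hqs (not_le.1 hc))
    have huq : q < u T := by
      rw [← h.2.1]
      exact mono_of_w h.1 hpos (left_mem_Icc.2 hT0.le) (right_mem_Icc.2 hT0.le) hT0
    refine ⟨T, hT0, hwT, hpos, ?_, huTs⟩
    have hd := (h.1 T).2
    rw [hwT, mul_zero, add_zero, cc_of_mem ⟨huq.le, huTs⟩] at hd
    have hge : u0 ≤ u T := by
      by_contra hc
      obtain ⟨ε', hε', hb⟩ := sign_near hd hwT (S.pos _ ⟨huq.le, not_le.1 hc⟩)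
      set z := max (T - ε') (T/2)
      have hz1 : z < T := max_lt (by linarith) (by linarith)
      have hz2 : T - ε' ≤ z := le_max_left _ _
      have hz3 : T / 2 ≤ z := le_max_right _ _
      have h3 := (hb z (by rw [abs_le]; constructor <;> linarith)).2 hz1
      linarith [hpos z ⟨by linarith, hz1⟩]
    rcases hge.eq_or_lt with e | hlt
    · exfalso
      have hconst : GS (cc F q s) (cc G q s) (fun _ => u0) (fun _ => 0) := by
        intro z
        refine ⟨hasDerivAt_const _ _, ?_⟩
        have := hasDerivAt_const z (0:ℝ)
        exact this.congr_deriv (by rw [cc_of_mem ⟨S.hq.le, h0⟩, S.zero]; simp)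
      have := (GS_unique hL hGc hM h.1 hconst T e.symm hwT 0).1
      rw [h.2.1] at this
      linarith [S.hq]
    · exact hlt

lemma Setup.over_neg {F : ℝ → ℝ} {q u0 b : ℝ} (S : Setup F q u0 b) {G : ℝ → ℝ}
    (hG : ContinuousOn G (Ico q b)) {s : ℝ} (h0 : u0 ≤ s) (h2 : s < b) {u w : ℝ → ℝ}
    (h : Can F G q s u w) (hO : Over u w u0) : G u0 < 0 := by
  by_contra hn
  push Not at hn
  have hqs : q < s := S.hq.trans_le h0
  obtain ⟨k, hk, δ, hδ, hlin⟩ := S.lin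
  obtain ⟨ho1, hou, how⟩ := hO
  set η := min k 1 with hη
  have hηp : 0 < η := lt_min hk one_pos
  have hη1 : η ≤ k := min_le_left _ _
  have hη2 : η ≤ 1 := min_le_right _ _
  have hGl : Tendsto (fun z => cc G q s (u z)) atTop (nhds (G u0)) := by
    have := ((cc_cont hG hqs.le h2).tendsto u0).comp hou
    rwa [cc_of_mem ⟨S.hq.le, h0⟩] at this
  have key : Tendsto (fun z => - ((u0 - u z) / w z)) atTop atTop := by
    refine tendsto_top_of_deriv (m := 1/2)
      (d := fun z => - ((-w z * w z - (u0 - u z) * (cc F q s (u z) + cc G q s (u z) * w z)) / w z ^ 2))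
      (by norm_num) ?_
    filter_upwards [hGl.eventually (lt_mem_nhds (show -η < G u0 by linarith)),
      hou.eventually (lt_mem_nhds (show u0 - δ < u0 by linarith)),
      hou.eventually (lt_mem_nhds S.hq), eventually_gt_atTop 0] with z e1 e2 e3 e4
    obtain ⟨hw, hu⟩ := ho1 z e4
    refine ⟨?_, ?_⟩
    · have := (((h.1 z).1.const_sub u0).div (h.1 z).2 hw.ne').neg
      exact this
    · have hF := hlin (u z) ⟨e2, hu⟩
      rw [cc_of_mem (H := F) ⟨e3.le, hu.le.trans h0⟩]
      set x := u0 - u z with hx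
      have hxp : 0 < x := by linarith
      set g := cc G q s (u z)
      set y := w z
      rw [show -((-y * y - x * (F (u z) + g * y)) / y ^ 2)
        = (y * y + x * (F (u z) + g * y)) / y ^ 2 by ring, le_div_iff₀ (by positivity)]
      have a1 : x * (k * x) ≤ x * F (u z) := mul_le_mul_of_nonneg_left hF hxp.le
      have a2 : x * y * (-η) ≤ x * y * g := mul_le_mul_of_nonneg_left e1.le (by positivity)
      have a3 : η * (x * x) ≤ k * (x * x) := mul_le_mul_of_nonneg_right hη1 (by positivity)
      have a4 : η * (y * y) ≤ 1 * (y * y) := mul_le_mul_of_nonneg_right hη2 (by positivity)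
      nlinarith [mul_nonneg hηp.le (sq_nonneg (x - y)), mul_nonneg hηp.le (sq_nonneg x)]
  obtain ⟨z, hz, hz'⟩ := ((key.eventually (eventually_ge_atTop 0)).and
    (eventually_gt_atTop 0)).exists
  obtain ⟨hw, hu⟩ := ho1 z hz'
  have : 0 < (u0 - u z) / w z := div_pos (by linarith) hw
  linarith

lemma Setup.R_u0 {F : ℝ → ℝ} {q u0 b : ℝ} (S : Setup F q u0 b) {G : ℝ → ℝ}
    (hG : ContinuousOn G (Ico q b)) (hn : 0 ≤ G u0) : R F q G u0 := by
  by_contra hR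
  obtain ⟨u, w, h⟩ := S.can hG S.hq.le S.hb
  rcases S.alt hG le_rfl S.hb h hR with ⟨T, _, _, _, h1, h2⟩ | hO
  · linarith
  · linarith [S.over_neg hG le_rfl S.hb h hO]

lemma Setup.ext {F : ℝ → ℝ} {q u0 b : ℝ} (S : Setup F q u0 b) {G : ℝ → ℝ}
    (hG : ContinuousOn G (Ico q b)) {s : ℝ} (h0 : q < s) (h2 : s < b) (hR : R F q G s) :
    ∃ s' ∈ Ioo s b, R F q G s' := by
  set s2 := (s + b) / 2 with hs2
  obtain ⟨u, w, h⟩ := S.can hG (s := s2) (by linarith) (by linarith)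
  rw [S.R_iff hG h0.le (s' := s2) (by linarith) (by linarith) h] at hR
  obtain ⟨T, hT, hu, hw⟩ := hR
  have hwT := hw T ⟨hT, le_rfl⟩
  obtain ⟨ε, hε, hb⟩ := Metric.eventually_nhds_iff.1
    (h.1.continuous_w.tendsto T |>.eventually (lt_mem_nhds hwT))
  have hw' : ∀ z ∈ Ioc 0 (T + ε/2), 0 < w z := by
    intro z hz
    rcases le_total z T with hzT | hzT
    · exact hw z ⟨hz.1, hzT⟩
    · exact hb (by rw [Real.dist_eq, abs_of_nonneg (by linarith)]; linarith [hz.2])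
  have hlt : s < u (T + ε/2) := by
    rw [← hu]
    exact mono_of_w h.1 (T0 := 0) (T := T + ε/2) (fun z hz => hw' z (Ioo_subset_Ioc_self hz))
      ⟨hT.le, by linarith⟩ ⟨by linarith, le_rfl⟩ (by linarith)
  have hs3 : s < min (u (T + ε/2)) s2 := lt_min hlt (by linarith)
  refine ⟨min (u (T + ε/2)) s2, ⟨hs3, (min_le_right _ _).trans_lt (by linarith)⟩, ?_⟩
  rw [S.R_iff hG (by linarith) (min_le_right _ _) (by linarith) h]
  rcases (min_le_left (u (T + ε/2)) s2).eq_or_lt with e | hl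
  · exact ⟨T + ε/2, by linarith, e.symm, hw'⟩
  · exact RT_lower h.1 h.2.1 (by linarith) (fun z hz => hw' z (Ioo_subset_Ioc_self hz))
      (by linarith) hl

lemma cc_close {G G' : ℝ → ℝ} {q s ε : ℝ} (h : q ≤ s) (hc : ∀ x ∈ Icc q s, |G' x - G x| ≤ ε) :
    ∀ x, |cc G' q s x - cc G q s x| ≤ ε := fun x => hc _ (cl_mem h x)

lemma Setup.R_open {F : ℝ → ℝ} {q u0 b : ℝ} (S : Setup F q u0 b) {G : ℝ → ℝ}
    (hG : ContinuousOn G (Ico q b)) {s : ℝ} (h0 : u0 ≤ s) (h2 : s < b) (hR : R F q G s) :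
    ∃ s1 ∈ Ioo s b, ∃ ε > 0, ∀ G' : ℝ → ℝ, ContinuousOn G' (Ico q b) →
      (∀ x ∈ Icc q s1, |G' x - G x| ≤ ε) → R F q G' s := by
  have hqs : q < s := S.hq.trans_le h0
  obtain ⟨s1, hs1, hR1⟩ := S.ext hG hqs h2 hR
  have hqs1 : q ≤ s1 := hqs.le.trans hs1.1.le
  obtain ⟨u, w, h, T1, hT1, hu, hw⟩ := hR1
  have hw' : ∀ z ∈ Ioo 0 T1, 0 < w z := fun z hz => hw z (Ioo_subset_Ioc_self hz)
  have hmono := (mono_of_w h.1 hw').monotoneOn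
  obtain ⟨z0, hz0, e0⟩ : ∃ z0 ∈ Ioo 0 T1, u z0 = (q + u0)/2 := by
    have := intermediate_value_Ioo hT1.le h.1.continuous_u.continuousOn
    rw [h.2.1, hu] at this
    exact this ⟨by linarith [S.hq], by linarith [S.hq, hs1.1]⟩
  obtain ⟨zm, hzm, hmin⟩ := (isCompact_Icc (a := z0) (b := T1)).exists_isMinOn
    ⟨z0, le_rfl, hz0.2.le⟩ h.1.continuous_w.continuousOn
  have hm : 0 < w zm := hw zm ⟨hz0.1.trans_le hzm.1, hzm.2⟩
  obtain ⟨L, hL⟩ := S.cc_lip hqs1 hs1.2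
  obtain ⟨M, hM⟩ := cc_bdd hG hqs1 hs1.2
  have hηp : 0 < min (w zm) (min (s1 - s) ((u0 - q)/2)) :=
    lt_min hm (lt_min (by linarith [hs1.1]) (by linarith [S.hq]))
  have hη1 : min (w zm) (min (s1 - s) ((u0 - q)/2)) ≤ w zm := min_le_left _ _
  have hη2 : min (w zm) (min (s1 - s) ((u0 - q)/2)) ≤ s1 - s :=
    (min_le_right _ _).trans (min_le_left _ _)
  have hη3 : min (w zm) (min (s1 - s) ((u0 - q)/2)) ≤ (u0 - q)/2 :=
    (min_le_right _ _).trans (min_le_right _ _)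
  generalize min (w zm) (min (s1 - s) ((u0 - q)/2)) = η at *
  obtain ⟨ε, hε, hdep⟩ := GS_dep hL (cc_cont hG hqs1 hs1.2) hM h.1 T1 hηp
  refine ⟨s1, hs1, ε, hε, fun G' hG' hcl => ?_⟩
  obtain ⟨u', w', h'⟩ := S.can hG' hqs1 hs1.2
  have hd := hdep _ (cc_cont hG' hqs1 hs1.2) (cc_close hqs1 hcl) u' w' h'.1
    (by rw [h'.2.1, h.2.1]) (by rw [h'.2.2, h.2.2])
  by_contra hn
  have hn1 : ¬ R F q G' s1 := fun hc => hn (S.R_lower hG' hqs hs1.1.le hs1.2 hc)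
  rw [S.R_iff hG' hqs.le hs1.1.le hs1.2 h'] at hn
  have hT1s : s < u' T1 := by
    have := (abs_lt.1 (hd T1 ⟨hT1.le, le_rfl⟩).1).1
    linarith
  rcases S.alt hG' (h0.trans hs1.1.le) hs1.2 h' hn1 with ⟨T, hT, hwT, hwp, huT⟩ | hO
  · rcases le_or_gt T T1 with hTT | hTT
    · rcases le_or_gt z0 T with hz | hz
      · have a1 := (abs_lt.1 (hd T ⟨hT.le, hTT⟩).2).1
        have a2 : w zm ≤ w T := hmin ⟨hz, hTT⟩
        linarith
      · have a1 := (abs_lt.1 (hd T ⟨hT.le, hTT⟩).1).2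
        have a2 : u T ≤ u z0 := hmono ⟨hT.le, hTT⟩ ⟨hz0.1.le, hz0.2.le⟩ hz.le
        linarith [huT.1]
    · exact hn (RT_lower h'.1 h'.2.1 hT1 (fun z hz => hwp z ⟨hz.1, hz.2.trans hTT⟩) hqs hT1s)
  · linarith [(hO.1 T1 hT1).2]

lemma prim_neg {f : ℝ → ℝ} (hf : Continuous f) {a x : ℝ} (hx : a < x)
    (h : ∀ t ∈ Ioo a x, f t < 0) : prim f a x < 0 := by
  have : StrictAntiOn (prim f a) (Icc a x) := by
    apply strictAntiOn_of_deriv_neg (convex_Icc _ _)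
      (fun t _ => (prim_deriv hf a t).continuousAt.continuousWithinAt)
    intro t ht
    rw [interior_Icc] at ht
    rw [(prim_deriv hf a t).deriv]; exact h t ht
  have := this (left_mem_Icc.2 hx.le) (right_mem_Icc.2 hx.le) hx
  rwa [prim_self] at this

lemma Setup.nR_open {F : ℝ → ℝ} {q u0 b : ℝ} (S : Setup F q u0 b) {G : ℝ → ℝ}
    (hG : ContinuousOn G (Ico q b)) {s s' : ℝ} (h0 : u0 ≤ s) (hss : s < s') (h2 : s' < b)
    (hR : ¬ R F q G s) :
    ∃ ε > 0, ∀ G' : ℝ → ℝ, ContinuousOn G' (Ico q b) →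
      (∀ x ∈ Icc q s', |G' x - G x| ≤ ε) → ¬ R F q G' s' := by
  have hqs : q < s := S.hq.trans_le h0
  have hqs' : q ≤ s' := hqs.le.trans hss.le
  obtain ⟨u, w, h⟩ := S.can hG hqs' h2
  obtain ⟨L, hL⟩ := S.cc_lip hqs' h2
  obtain ⟨M, hM⟩ := cc_bdd hG hqs' h2
  have hn1 : ¬ R F q G s' := fun hc => hR (S.R_lower hG hqs hss.le h2 hc)
  rw [S.R_iff hG hqs.le hss.le h2 h] at hR
  rcases S.alt hG (h0.trans hss.le) h2 h hn1 with ⟨T, hT, hwT, hwp, huT⟩ | hO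
  · have hps : u T ≤ s := by
      by_contra hc
      exact hR (RT_lower h.1 h.2.1 hT hwp hqs (not_le.1 hc))
    have hr := range_RT h.1 h.2.1 hwp
    have hd := (h.1 T).2.neg
    have hFn := S.neg (u T) ⟨huT.1, by linarith⟩
    rw [hwT, mul_zero, add_zero, cc_of_mem (hr T ⟨hT.le, le_rfl⟩ |>.imp_right
      (fun _ => hps.trans hss.le))] at hd
    obtain ⟨e, he, hsn⟩ := sign_near (w := -w) hd (by simp [hwT]) (by linarith)
    have hwneg : ∀ z ∈ Ioc T (T + e), w z < 0 := by
      intro z hz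
      have := (hsn z (by rw [abs_of_pos (by linarith [hz.1])]; linarith [hz.2])).1 hz.1
      simpa using this
    have hanti : AntitoneOn u (Icc T (T + e)) := by
      apply antitoneOn_of_deriv_nonpos (convex_Icc _ _) h.1.continuous_u.continuousOn
        (fun z _ => (h.1 z).1.differentiableAt.differentiableWithinAt)
      intro z hz
      rw [interior_Icc] at hz
      rw [(h.1 z).1.deriv]
      exact (hwneg z (Ioo_subset_Ioc_self hz)).le
    have hus : ∀ z ∈ Icc 0 (T + e), u z ≤ s := by
      intro z hz
      rcases le_total z T with hzT | hzT
      · exact (hr z ⟨hz.1, hzT⟩).2.trans hps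
      · exact (hanti ⟨le_rfl, by linarith⟩ ⟨hzT, hz.2⟩ hzT).trans hps
    have hw2 : w (T + e) < 0 := hwneg _ ⟨by linarith, le_rfl⟩
    have hηp : 0 < min (-w (T + e)) (s' - s) := lt_min (by linarith) (by linarith)
    have hη1 := min_le_left (-w (T + e)) (s' - s)
    have hη2 := min_le_right (-w (T + e)) (s' - s)
    generalize min (-w (T + e)) (s' - s) = η at *
    obtain ⟨ε, hε, hdep⟩ := GS_dep hL (cc_cont hG hqs' h2) hM h.1 (T + e) hηp
    refine ⟨ε, hε, fun G' hG' hcl hR' => ?_⟩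
    obtain ⟨u', w', h', T', hT', hu', hw'⟩ := hR'
    have hd := hdep _ (cc_cont hG' hqs' h2) (cc_close hqs' hcl) u' w' h'.1
      (by rw [h'.2.1, h.2.1]) (by rw [h'.2.2, h.2.2])
    rcases le_or_gt T' (T + e) with hl | hl
    · have a1 := (abs_lt.1 (hd T' ⟨hT'.le, hl⟩).1).2
      linarith [hus T' ⟨hT'.le, hl⟩]
    · have a1 := (abs_lt.1 (hd (T + e) ⟨by linarith, le_rfl⟩).2).2
      linarith [hw' (T + e) ⟨by linarith, hl.le⟩]
  · have hGn := S.over_neg hG (h0.trans hss.le) h2 h hO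
    have hGc := cc_cont hG hqs' h2
    have hu0m : u0 ∈ Icc q s' := ⟨S.hq.le, h0.trans hss.le⟩
    obtain ⟨L, hL⟩ := S.cc_lip hqs' h2
    have hFc := hL.continuous
    obtain ⟨δ, hδ, hδG⟩ := Metric.eventually_nhds_iff.1
      (hGc.tendsto u0 |>.eventually (gt_mem_nhds (show cc G q s' u0 < G u0 / 2 by
        rw [cc_of_mem hu0m]; linarith)))
    obtain ⟨s2, hs2, hs2', hs2''⟩ : ∃ s2, u0 < s2 ∧ s2 ≤ s' ∧ s2 < u0 + δ :=
      ⟨min s' (u0 + δ/2), lt_min (by linarith) (by linarith), min_le_left _ _,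
        (min_le_right _ _).trans_lt (by linarith)⟩
    set P := prim (cc F q s') u0 with hP
    have hPs2 : P s2 < 0 := by
      apply prim_neg hFc hs2
      intro t ht
      rw [cc_of_mem ⟨by linarith [ht.1, S.hq], by linarith [ht.2]⟩]
      exact S.neg t ⟨ht.1, by linarith [ht.2]⟩
    have hPc : Continuous P := continuous_iff_continuousAt.2
      fun x => (prim_deriv hFc u0 x).continuousAt
    have hNl : Tendsto (fun z => w z ^ 2 / 2 - P (u z)) atTop (nhds 0) := by
      have := ((hO.2.2.pow 2).div_const 2).sub ((hPc.tendsto u0).comp hO.2.1)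
      have e : P u0 = 0 := prim_self _ _
      simpa [e] using this
    obtain ⟨T0, ⟨hN, hu0⟩, hT0⟩ := ((hNl.eventually (gt_mem_nhds (show 0 < - P s2 by linarith))).and
      (hO.2.1.eventually (lt_mem_nhds (show u0 - δ < u0 by linarith)))).and
      (eventually_gt_atTop 0) |>.exists
    have hev : ∀ᶠ p : ℝ × ℝ in nhds (u T0, w T0), p.2 ^ 2 / 2 - P p.1 < - P s2 ∧ u0 - δ < p.1 := by
      have c1 : Continuous (fun p : ℝ × ℝ => p.2 ^ 2 / 2 - P p.1) := by fun_prop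
      exact (c1.tendsto (u T0, w T0) |>.eventually (gt_mem_nhds hN)).and
        (continuous_fst.tendsto (u T0, w T0) |>.eventually (lt_mem_nhds hu0))
    obtain ⟨η0, hη0, hball⟩ := Metric.eventually_nhds_iff.1 hev
    have hηp : 0 < min η0 (s2 - u0) := lt_min hη0 (by linarith)
    have hη1 := min_le_left η0 (s2 - u0)
    have hη2 := min_le_right η0 (s2 - u0)
    generalize min η0 (s2 - u0) = η at *
    obtain ⟨ε, hε, hdep⟩ := GS_dep hL (cc_cont hG hqs' h2) hM h.1 T0 hηp
    refine ⟨min ε (- G u0 / 2), lt_min hε (by linarith), fun G' hG' hcl hR' => ?_⟩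
    have hcl1 := cc_close hqs' hcl
    replace hR' := S.R_lower hG' (by linarith [S.hq]) hs2' h2 hR'
    obtain ⟨u', w', h'⟩ := S.can hG' hqs' h2
    rw [S.R_iff hG' (by linarith [S.hq]) hs2' h2 h'] at hR'
    obtain ⟨T', hT', hu', hw'⟩ := hR'
    have hd := hdep _ (cc_cont hG' hqs' h2) (fun x => (hcl1 x).trans (min_le_left _ _)) u' w' h'.1
      (by rw [h'.2.1, h.2.1]) (by rw [h'.2.2, h.2.2])
    have hTT : T0 < T' := by
      by_contra hc
      push Not at hc
      have a1 := (abs_lt.1 (hd T' ⟨hT'.le, hc⟩).1).2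
      linarith [(hO.1 T' hT').2]
    have hT0d := hd T0 ⟨hT0.le, le_rfl⟩
    have hb2 := hball (y := (u' T0, w' T0)) (by
      rw [Prod.dist_eq, Real.dist_eq, Real.dist_eq]
      exact max_lt (hT0d.1.trans_le hη1) (hT0d.2.trans_le hη1))
    have hmono := (mono_of_w h'.1 (T0 := 0) (T := T')
      (fun z hz => hw' z (Ioo_subset_Ioc_self hz))).monotoneOn
    have he := energy_anti h'.1 hFc u0 hTT.le (fun z hz => by
      have m1 : u' T0 ≤ u' z := hmono ⟨hT0.le, hTT.le⟩ ⟨by linarith [hz.1], hz.2.le⟩ hz.1.le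
      have m2 : u' z ≤ u' T' := hmono ⟨by linarith [hz.1], hz.2.le⟩ ⟨hT'.le, le_rfl⟩ hz.2.le
      have b1 := hδG (y := u' z) (by
        rw [Real.dist_eq, abs_lt]; constructor <;> linarith [hb2.2])
      have b2 := (abs_le.1 (hcl1 (u' z))).2
      have b3 := min_le_right ε (-G u0 / 2)
      linarith)
    have hb21 := hb2.1
    rw [hu'] at he
    simp only at hb21
    nlinarith [sq_nonneg (w' T')]

lemma Setup.R_of_nonneg {F : ℝ → ℝ} {q u0 b : ℝ} (S : Setup F q u0 b) {G : ℝ → ℝ}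
    (hG : ContinuousOn G (Ico q b)) {s : ℝ} (h0 : u0 ≤ s) (h2 : s < b)
    (hp : ∀ x ∈ Ico q b, 0 ≤ G x) (hR : R F q (fun x => - G x) s) : R F q G s := by
  by_contra hn
  have hqs : q < s := S.hq.trans_le h0
  obtain ⟨u, w, h⟩ := S.can hG hqs.le h2
  obtain ⟨L, hL⟩ := S.cc_lip hqs.le h2
  rcases S.alt hG h0 h2 h hn with ⟨T, hT, hwT, hwp, huT⟩ | hO
  · have hG' : ContinuousOn (fun x => - G x) (Ico q b) := hG.neg
    obtain ⟨u', w', h'⟩ := S.can hG' hqs.le h2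
    replace hR := S.R_lower hG' (by linarith [S.hq, huT.1]) huT.2 h2 hR
    rw [S.R_iff hG' (by linarith [S.hq, huT.1]) huT.2 h2 h'] at hR
    obtain ⟨T', hT', hu', hw'⟩ := hR
    have hpc : ∀ x, 0 ≤ cc G q s x := fun x =>
      hp _ ⟨(cl_mem hqs.le x).1, (cl_mem hqs.le x).2.trans_lt h2⟩
    have e1 := energy_mono h.1 hL.continuous q hT.le (fun z _ => hpc (u z))
    have e2 := energy_anti h'.1 hL.continuous q hT'.le (fun z _ => by
      have := hpc (u' z)
      show - cc G q s (u' z) ≤ 0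
      linarith)
    rw [h.2.1, h.2.2, hwT] at e1
    rw [h'.2.1, h'.2.2, hu'] at e2
    have := hw' T' ⟨hT', le_rfl⟩
    nlinarith
  · linarith [S.over_neg hG h0 h2 h hO, hp u0 ⟨S.hq.le, S.hb⟩]

lemma Hit.not_RT {f g u w : ℝ → ℝ} (h : GS f g u w) {T x : ℝ}
    (hT : 0 < T) (hwT : w T = 0) (hwp : ∀ z ∈ Ioo 0 T, 0 < w z) (hx : u T < x) : ¬ RT u w x := by
  rintro ⟨T', hT', hu, hw⟩
  rcases le_or_gt T T' with hl | hl
  · linarith [hw T ⟨hT, hl⟩]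
  · have := mono_of_w h hwp ⟨hT'.le, hl.le⟩ ⟨hT.le, le_rfl⟩ hl
    linarith

lemma Setup.hit_le {F : ℝ → ℝ} {q u0 b : ℝ} (S : Setup F q u0 b) {G G' : ℝ → ℝ}
    (hG : ContinuousOn G (Ico q b)) (hG' : ContinuousOn G' (Ico q b)) {s T T' : ℝ}
    (h2 : s < b) {u w u' w' : ℝ → ℝ} (h : Can F G q s u w) (h' : Can F G' q s u' w')
    (hT : 0 < T) (hwT : w T = 0) (hwp : ∀ z ∈ Ioo 0 T, 0 < w z) (hu : u T ∈ Ioc u0 s)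
    (hT' : 0 < T') (hwp' : ∀ z ∈ Ioo 0 T', 0 < w' z) (hu' : u' T' ∈ Ioc u0 s)
    (hiff : ∀ x ∈ Ico u0 b, R F q G' x → R F q G x) : u' T' ≤ u T := by
  by_contra hc
  push Not at hc
  have hq := S.hq
  have h1 := hu.1
  have h3 := hu'.2
  set x := (u T + u' T') / 2 with hx
  have := hiff x ⟨by linarith, by linarith⟩ (by
    rw [S.R_iff hG' (by linarith) (s' := s) (by linarith) h2 h']
    exact RT_lower h'.1 h'.2.1 hT' hwp' (by linarith) (by linarith))
  rw [S.R_iff hG (by linarith) (s' := s) (by linarith) h2 h] at this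
  exact Hit.not_RT h.1 hT hwT hwp (by linarith) this

lemma Setup.periodic {F : ℝ → ℝ} {q u0 b : ℝ} (S : Setup F q u0 b) {G : ℝ → ℝ}
    (hG : ContinuousOn G (Ico q b)) {s T T' : ℝ} (h0 : u0 ≤ s)
    (h2 : s < b) {u w u' w' : ℝ → ℝ} (h : Can F G q s u w)
    (h' : Can F (fun x => - G x) q s u' w')
    (hT : 0 < T) (hwT : w T = 0) (hwp : ∀ z ∈ Ioo 0 T, 0 < w z) (hu : u T ∈ Ioc u0 s)
    (hT' : 0 < T') (hwT' : w' T' = 0) (hwp' : ∀ z ∈ Ioo 0 T', 0 < w' z) (heq : u' T' = u T) :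
    GS F G u w ∧ (∀ z, u z ∈ Icc q (u T)) ∧ IsPeriodicSol u w ∧ Nonconst u w := by
  have hqs : q ≤ s := S.hq.le.trans h0
  obtain ⟨L, hL⟩ := S.cc_lip hqs h2
  obtain ⟨M, hM⟩ := cc_bdd hG hqs h2
  have hGc := cc_cont hG hqs h2
  have hrev : GS (cc F q s) (cc G q s) (fun z => u' (-z)) (fun z => - w' (-z)) := by
    have := h'.1.reverse
    have e : (fun x => - cc (fun x => - G x) q s x) = cc G q s := by
      funext x; simp [cc]
    rwa [e] at this
  have heqs := GS_unique hL hGc hM h.1 hrev 0 (by simp [h.2.1, h'.2.1]) (by simp [h.2.2, h'.2.2])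
  have hper := GS_unique hL hGc hM (h.1.shift (T + T')) h.1 (-T')
    (by
      rw [(heqs (-T')).1, neg_neg, heq, show -T' + (T + T') = T by ring])
    (by
      rw [(heqs (-T')).2, neg_neg, hwT', show -T' + (T + T') = T by ring, hwT, neg_zero])
  have hrange : ∀ z, u z ∈ Icc q (u T) := by
    intro z
    have hp : Function.Periodic u (T + T') := fun z => (hper z).1
    obtain ⟨y, hy, e⟩ := hp.exists_mem_Ico (by linarith) z (-T')
    rw [e]
    rcases le_total 0 y with h0y | h0y
    · exact range_RT h.1 h.2.1 hwp y ⟨h0y, by linarith [hy.2]⟩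
    · rw [(heqs y).1, ← heq]
      exact range_RT h'.1 h'.2.1 hwp' (-y) ⟨by linarith, by linarith [hy.1]⟩
  refine ⟨fun z => ?_, hrange, ⟨T + T', by linarith, hper⟩, T, Or.inl ?_⟩
  · have := h.1 z
    have hm : u z ∈ Icc q s := ⟨(hrange z).1, (hrange z).2.trans hu.2⟩
    rwa [cc_of_mem hm, cc_of_mem hm] at this
  · rw [h.2.1]
    have := hu.1
    have := S.hq
    intro hc; linarith

def AA (F : ℝ → ℝ) (q u0 b : ℝ) (G : ℝ → ℝ) : Prop :=
  ∃ s ∈ Ico u0 b, R F q G s ∧ ¬ R F q (fun x => - G x) s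

def PP (F : ℝ → ℝ) (q u0 b : ℝ) (G : ℝ → ℝ) : Prop :=
  ∃ p ∈ Ioo u0 b, ∃ u w, GS F G u w ∧ (∀ z, u z ∈ Icc q p) ∧ u 0 = q ∧ w 0 = 0 ∧
    IsPeriodicSol u w ∧ Nonconst u w

lemma negneg (G : ℝ → ℝ) : (fun x => - (fun x => - G x) x) = G := by funext x; simp

lemma Setup.trich {F : ℝ → ℝ} {q u0 b : ℝ} (S : Setup F q u0 b) {G : ℝ → ℝ}
    (hG : ContinuousOn G (Ico q b))
    (hs : ∃ s ∈ Ioo q b, ¬ R F q G s ∨ ¬ R F q (fun x => - G x) s) :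
    AA F q u0 b G ∨ AA F q u0 b (fun x => - G x) ∨ PP F q u0 b G := by
  by_contra hc
  push Not at hc
  obtain ⟨hA, hB, hP⟩ := hc
  have hG' : ContinuousOn (fun x => - G x) (Ico q b) := hG.neg
  have iff1 : ∀ x ∈ Ico u0 b, R F q G x → R F q (fun x => - G x) x := by
    intro x hx hR
    by_contra hn
    exact hA ⟨x, hx, hR, hn⟩
  have iff2 : ∀ x ∈ Ico u0 b, R F q (fun x => - G x) x → R F q G x := by
    intro x hx hR
    by_contra hn
    exact hB ⟨x, hx, hR, by rwa [negneg]⟩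
  have hb := S.hb
  have hRu0 : R F q G u0 := by
    rcases le_total 0 (G u0) with h | h
    · exact S.R_u0 hG h
    · exact iff2 u0 ⟨le_rfl, hb⟩ (S.R_u0 hG' (by linarith))
  have hRu0' := iff1 u0 ⟨le_rfl, hb⟩ hRu0
  obtain ⟨s0, hs0, hor⟩ := hs
  obtain ⟨s, hsm, hsb, hn⟩ : ∃ s, u0 ≤ s ∧ s < b ∧ (¬ R F q G s ∨ ¬ R F q (fun x => - G x) s) := by
    refine ⟨max s0 u0, le_max_right _ _, max_lt hs0.2 hb, ?_⟩
    rcases hor with h | h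
    · exact Or.inl fun hc => h (S.R_lower hG hs0.1 (le_max_left _ _) (max_lt hs0.2 hb) hc)
    · exact Or.inr fun hc => h (S.R_lower hG' hs0.1 (le_max_left _ _) (max_lt hs0.2 hb) hc)
  have hn1 : ¬ R F q G s := by
    rcases hn with h | h
    · exact h
    · exact fun hc => h (iff1 s ⟨hsm, hsb⟩ hc)
  have hn2 : ¬ R F q (fun x => - G x) s := fun hc => hn1 (iff2 s ⟨hsm, hsb⟩ hc)
  have hqs := S.hq.le.trans hsm
  obtain ⟨u, w, h⟩ := S.can hG hqs hsb
  obtain ⟨u', w', h'⟩ := S.can hG' hqs hsb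
  rw [S.R_iff hG S.hq.le hsm hsb h] at hRu0
  rw [S.R_iff hG' S.hq.le hsm hsb h'] at hRu0'
  have nO : ∀ {u w : ℝ → ℝ}, RT u w u0 → ¬ Over u w u0 := by
    rintro u w ⟨T, hT, hu, _⟩ hO
    linarith [(hO.1 T hT).2]
  rcases S.alt hG hsm hsb h hn1 with ⟨T, hT, hwT, hwp, huT⟩ | hO
  swap
  · exact nO hRu0 hO
  rcases S.alt hG' hsm hsb h' hn2 with ⟨T', hT', hwT', hwp', huT'⟩ | hO
  swap
  · exact nO hRu0' hO
  have e : u' T' = u T := le_antisymm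
    (S.hit_le hG hG' hsb h h' hT hwT hwp huT hT' hwp' huT' iff2)
    (S.hit_le hG' hG hsb h' h hT' hwT' hwp' huT' hT hwp huT iff1)
  obtain ⟨p1, p2, p3, p4⟩ := S.periodic hG hsm hsb h h' hT hwT hwp huT hT' hwT' hwp' e
  exact hP ⟨u T, ⟨huT.1, huT.2.trans_lt hsb⟩, u, w, p1, p2, h.2.1, h.2.2, p3, p4⟩

lemma Setup.AA_excl {F : ℝ → ℝ} {q u0 b : ℝ} (S : Setup F q u0 b) {G : ℝ → ℝ}
    (hG : ContinuousOn G (Ico q b)) (hA : AA F q u0 b G) (hB : AA F q u0 b (fun x => - G x)) :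
    False := by
  obtain ⟨s, hs, h1, h2⟩ := hA
  obtain ⟨t, ht, h3, h4⟩ := hB
  rw [negneg] at h4
  have hq := S.hq
  rcases le_total s t with h | h
  · exact h2 (S.R_lower hG.neg (by linarith [hs.1]) h ht.2 h3)
  · exact h4 (S.R_lower hG (by linarith [ht.1]) h hs.2 h1)

lemma Setup.AA_open {F : ℝ → ℝ} {q u0 b : ℝ} (S : Setup F q u0 b) {G : ℝ → ℝ}
    (hG : ContinuousOn G (Ico q b)) (hA : AA F q u0 b G) :
    ∃ s ∈ Ico q b, ∃ ε > 0, ∀ G' : ℝ → ℝ, ContinuousOn G' (Ico q b) →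
      (∀ x ∈ Icc q s, |G' x - G x| ≤ ε) → AA F q u0 b G' := by
  obtain ⟨s, hs, h1, h2⟩ := hA
  have hq := S.hq
  obtain ⟨s', hs', h1'⟩ := S.ext hG (by linarith [hs.1]) hs.2 h1
  obtain ⟨s1, hs1, ε1, hε1, H1⟩ := S.R_open hG (hs.1.trans hs'.1.le) hs'.2 h1'
  obtain ⟨ε2, hε2, H2⟩ := S.nR_open hG.neg hs.1 hs'.1 hs'.2 h2
  refine ⟨s1, ⟨by linarith [hs.1, hs'.1, hs1.1], hs1.2⟩, min ε1 ε2, lt_min hε1 hε2,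
    fun G' hG' hcl => ⟨s', ⟨hs.1.trans hs'.1.le, hs'.2⟩, ?_, ?_⟩⟩
  · exact H1 G' hG' fun x hx => (hcl x hx).trans (min_le_left _ _)
  · refine H2 _ hG'.neg fun x hx => ?_
    have := (hcl x ⟨hx.1, hx.2.trans hs1.1.le⟩).trans (min_le_right _ _)
    rw [abs_sub_comm] at this
    simpa [neg_add_eq_sub] using this

theorem Setup.main {F : ℝ → ℝ} {q u0 b : ℝ} (S : Setup F q u0 b) {Gm : ℝ → ℝ → ℝ}
    (hG : ∀ μ, ContinuousOn (Gm μ) (Ico q b))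
    (hcont : ∀ μ0, ∀ s ∈ Ico q b, ∀ ε > 0, ∀ᶠ μ in nhds μ0, ∀ x ∈ Icc q s,
      |Gm μ x - Gm μ0 x| ≤ ε)
    (hpos : ∃ μ, ∀ x ∈ Ico q b, 0 ≤ Gm μ x)
    (hneg : ∃ μ, ∀ x ∈ Ico q b, Gm μ x ≤ 0)
    (hcov : ∀ μ, ∃ s ∈ Ioo q b, ¬ R F q (Gm μ) s ∨ ¬ R F q (fun x => - Gm μ x) s) :
    ∃ μ, PP F q u0 b (Gm μ) := by
  by_contra hP
  push Not at hP
  have htr : ∀ μ, AA F q u0 b (Gm μ) ∨ AA F q u0 b (fun x => - Gm μ x) := by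
    intro μ
    rcases S.trich (hG μ) (hcov μ) with h | h | h
    · exact Or.inl h
    · exact Or.inr h
    · exact absurd h (hP μ)
  have oA : IsOpen {μ | AA F q u0 b (Gm μ)} := by
    rw [isOpen_iff_mem_nhds]
    intro μ0 h0
    obtain ⟨s, hs, ε, hε, H⟩ := S.AA_open (hG μ0) h0
    filter_upwards [hcont μ0 s hs ε hε] with μ hμ
    exact H _ (hG μ) hμ
  have oB : IsOpen {μ | AA F q u0 b (fun x => - Gm μ x)} := by
    rw [isOpen_iff_mem_nhds]
    intro μ0 h0
    obtain ⟨s, hs, ε, hε, H⟩ := S.AA_open (hG μ0).neg h0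
    filter_upwards [hcont μ0 s hs ε hε] with μ hμ
    refine H _ (hG μ).neg fun x hx => ?_
    have := hμ x hx
    rw [abs_sub_comm] at this
    simpa [neg_add_eq_sub] using this
  obtain ⟨μp, hμp⟩ := hpos
  obtain ⟨μn, hμn⟩ := hneg
  obtain ⟨μ, -, h1, h2⟩ := isPreconnected_univ _ _ oA oB (fun μ _ => htr μ)
    ⟨μp, trivial, by
      rcases htr μp with h | ⟨s, hs, h1, h2⟩
      · exact h
      · rw [negneg] at h2
        exact absurd (S.R_of_nonneg (hG μp) hs.1 hs.2 hμp h1) h2⟩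
    ⟨μn, trivial, by
      rcases htr μn with ⟨s, hs, h1, h2⟩ | h
      · exact absurd (S.R_of_nonneg (G := fun x => - Gm μn x) (hG μn).neg hs.1 hs.2
          (fun x hx => by have := hμn x hx; simpa using this) (by rwa [negneg])) h2
      · exact h⟩
  exact S.AA_excl (hG μ) h1 h2

lemma Setup.common {F : ℝ → ℝ} {q u0 b : ℝ} (S : Setup F q u0 b) {G : ℝ → ℝ}
    (hG : ContinuousOn G (Ico q b)) (hall : ∀ s ∈ Ioo q b, R F q G s) {s1 : ℝ}
    (hs1 : s1 ∈ Ioo q b) :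
    ∃ T1 > 0, ∃ w1, ∀ s ∈ Ioo s1 b, ∃ u w, Can F G q s u w ∧ u T1 = s1 ∧ w T1 = w1 ∧
      ∃ T > T1, u T = s ∧ ∀ z ∈ Ioc 0 T, 0 < w z := by
  obtain ⟨u, w, h, T1, hT1, hu, hw⟩ := hall s1 hs1
  refine ⟨T1, hT1, w T1, fun s hs => ?_⟩
  obtain ⟨u', w', h', T, hT, hu', hw'⟩ := hall s ⟨hs1.1.trans hs.1, hs.2⟩
  have hr := range_RT h.1 h.2.1 (T := T1) (fun z hz => hw z (Ioo_subset_Ioc_self hz))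
  rw [hu] at hr
  have ha := S.can_agree hG (hs1.1.trans hs.1).le hs.2 h h' (T := T1)
    (fun z hz => ⟨hr z hz, (hr z hz).1, (hr z hz).2.trans hs.1.le⟩)
  have a1 := ha T1 ⟨hT1.le, le_rfl⟩
  refine ⟨u', w', h', by rw [← a1.1, hu], a1.2.symm, T, ?_, hu', hw'⟩
  by_contra hc
  push Not at hc
  have a2 := (ha T ⟨hT.le, hc⟩).1
  have a3 := (hr T ⟨hT.le, hc⟩).2
  linarith [hs.1]

lemma range_after {f g u w : ℝ → ℝ} (h : GS f g u w) {T1 T : ℝ} (h1 : 0 < T1) (hT : T1 < T)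
    (hw : ∀ z ∈ Ioc 0 T, 0 < w z) : ∀ z ∈ Icc T1 T, u z ∈ Icc (u T1) (u T) := by
  have hm := (mono_of_w h (T0 := 0) (T := T) (fun z hz => hw z (Ioo_subset_Ioc_self hz))).monotoneOn
  intro z hz
  exact ⟨hm ⟨h1.le, hT.le⟩ ⟨h1.le.trans hz.1, hz.2⟩ hz.1,
    hm ⟨h1.le.trans hz.1, hz.2⟩ ⟨(h1.trans hT).le, le_rfl⟩ hz.2⟩

lemma anti_of_hasDeriv {v d : ℝ → ℝ} {a b : ℝ} (hab : a ≤ b)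
    (h : ∀ z ∈ Icc a b, HasDerivAt v (d z) z) (hd : ∀ z ∈ Ioo a b, d z ≤ 0) : v b ≤ v a := by
  refine antitoneOn_of_deriv_nonpos (convex_Icc a b)
    (fun z hz => (h z hz).continuousAt.continuousWithinAt)
    (fun z hz => (h z (interior_subset hz)).differentiableAt.differentiableWithinAt) ?_
    (left_mem_Icc.2 hab) (right_mem_Icc.2 hab) hab
  intro z hz
  rw [(h z (interior_subset hz)).deriv]
  rw [interior_Icc] at hz
  exact hd z hz

lemma Setup.death_a {F : ℝ → ℝ} {q u0 b : ℝ} (S : Setup F q u0 b) {G : ℝ → ℝ}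
    (hG : ContinuousOn G (Ico q b)) {s1 : ℝ} (hs1 : s1 ∈ Ioo q b) {Θ θ : ℝ → ℝ}
    (hΘ : ∀ x ∈ Ico s1 b, HasDerivAt Θ (θ x) x) (hF : ∀ x ∈ Ico s1 b, F x ≤ - θ x)
    (hG0 : ∀ x ∈ Ico s1 b, G x ≤ 0) (hunb : ∀ C, ∃ s ∈ Ioo s1 b, C < Θ s) :
    ∃ s ∈ Ioo q b, ¬ R F q G s := by
  by_contra hall
  push Not at hall
  obtain ⟨T1, hT1, w1, H⟩ := S.common hG hall hs1
  obtain ⟨s, hs, hC⟩ := hunb (w1 ^ 2 / 2 + Θ s1)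
  obtain ⟨u, w, h, hu1, hw1, T, hT, hu, hw⟩ := H s hs
  have hr := range_after h.1 hT1 hT hw
  rw [hu1, hu] at hr
  have := anti_of_hasDeriv (v := fun z => w z ^ 2 / 2 + Θ (u z)) hT.le (fun z hz =>
    (((h.1 z).2.pow 2).div_const 2).add
      ((hΘ (u z) ⟨(hr z hz).1, (hr z hz).2.trans_lt hs.2⟩).comp z (h.1 z).1)) (fun z hz => by
      have hz' := hr z (Ioo_subset_Icc_self hz)
      have hwz := hw z ⟨hT1.trans hz.1, hz.2.le⟩
      have hm : u z ∈ Icc q s := ⟨by linarith [hs1.1, hz'.1], hz'.2⟩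
      have hm' : u z ∈ Ico s1 b := ⟨hz'.1, hz'.2.trans_lt hs.2⟩
      rw [cc_of_mem hm, cc_of_mem hm]
      have f1 := hF _ hm'
      have f2 := hG0 _ hm'
      norm_num
      nlinarith [mul_nonneg hwz.le (show 0 ≤ - F (u z) - θ (u z) by linarith),
        mul_nonneg (mul_nonneg hwz.le hwz.le) (show 0 ≤ - G (u z) by linarith)])
  simp only [hu1, hw1, hu] at this
  nlinarith [sq_nonneg (w T)]

lemma Setup.death_b {F : ℝ → ℝ} {q u0 b : ℝ} (S : Setup F q u0 b) {G : ℝ → ℝ}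
    (hG : ContinuousOn G (Ico q b)) {s1 : ℝ} (hs1 : s1 ∈ Ioo u0 b) {Θ θ : ℝ → ℝ}
    (hΘ : ∀ x ∈ Ico s1 b, HasDerivAt Θ (θ x) x)
    (hG0 : ∀ x ∈ Ico s1 b, G x ≤ - θ x) (hunb : ∀ C, ∃ s ∈ Ioo s1 b, C < Θ s) :
    ∃ s ∈ Ioo q b, ¬ R F q G s := by
  by_contra hall
  push Not at hall
  have hq := S.hq
  obtain ⟨T1, hT1, w1, H⟩ := S.common hG hall (s1 := s1) ⟨by linarith [hs1.1], hs1.2⟩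
  obtain ⟨s, hs, hC⟩ := hunb (w1 + Θ s1)
  obtain ⟨u, w, h, hu1, hw1, T, hT, hu, hw⟩ := H s hs
  have hr := range_after h.1 hT1 hT hw
  rw [hu1, hu] at hr
  have := anti_of_hasDeriv (v := fun z => w z + Θ (u z)) hT.le (fun z hz =>
    (h.1 z).2.add
      ((hΘ (u z) ⟨(hr z hz).1, (hr z hz).2.trans_lt hs.2⟩).comp z (h.1 z).1)) (fun z hz => by
      have hz' := hr z (Ioo_subset_Icc_self hz)
      have hwz := hw z ⟨hT1.trans hz.1, hz.2.le⟩
      have hm : u z ∈ Icc q s := ⟨by linarith [hs1.1, hz'.1], hz'.2⟩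
      have hm' : u z ∈ Ico s1 b := ⟨hz'.1, hz'.2.trans_lt hs.2⟩
      rw [cc_of_mem hm, cc_of_mem hm]
      have f1 := S.neg (u z) ⟨hs1.1.trans_le hm'.1, hm'.2⟩
      have f2 := hG0 _ hm'
      nlinarith [mul_nonneg hwz.le (show 0 ≤ - G (u z) - θ (u z) by linarith)])
  simp only [hu1, hw1, hu] at this
  linarith [hw T ⟨hT1.trans hT, le_rfl⟩]

lemma Setup.het {F : ℝ → ℝ} {q u0 b : ℝ} (S : Setup F q u0 b) {G GH W : ℝ → ℝ}
    (hG : ContinuousOn G (Ico q b)) (hW : ∀ x ∈ Ico q b, 0 < W x)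
    (hWd : ∀ x ∈ Ico q b, HasDerivAt W (F x / W x + GH x) x)
    (hle : ∀ x ∈ Ico q b, G x ≤ GH x)
    (hW0 : ∀ d > 0, ∀ s1 < b, ∃ s ∈ Ioo s1 b, W s < d) :
    ∃ s ∈ Ioo q b, ¬ R F q G s := by
  by_contra hall
  push Not at hall
  have hq := S.hq
  have hb := S.hb
  set s1 := (u0 + b) / 2 with hs1
  obtain ⟨T1, hT1, w1, H⟩ := S.common hG hall (s1 := s1) ⟨by linarith, by linarith⟩
  have key : ∀ s ∈ Ioo s1 b, 0 < W s1 - w1 ∧ W s1 - w1 ≤ W s := by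
    intro s hs
    obtain ⟨u, w, h, hu1, hw1, T, hT, hu, hw⟩ := H s hs
    have hqs : q ≤ s := by linarith [hs.1]
    have hr := range_RT h.1 h.2.1 (T := T) (fun z hz => hw z (Ioo_subset_Ioc_self hz))
    rw [hu] at hr
    have hm' : ∀ z ∈ Icc 0 T, u z ∈ Ico q b := fun z hz =>
      ⟨(hr z hz).1, (hr z hz).2.trans_lt hs.2⟩
    have hWc : ContinuousOn W (Ico q b) := fun x hx => (hWd x hx).continuousAt.continuousWithinAt
    obtain ⟨L, hL⟩ := S.cc_lip hqs hs.2
    set I := fun z => cc F q s (u z) / cc W q s (u z) with hI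
    have hIc : Continuous I := by
      apply (hL.continuous.comp h.1.continuous_u).div
        ((cc_cont hWc hqs hs.2).comp h.1.continuous_u)
      intro z
      exact (hW _ ⟨(cl_mem hqs _).1, (cl_mem hqs _).2.trans_lt hs.2⟩).ne'
    set J := prim I 0 with hJ
    have hQd : ∀ z ∈ Icc 0 T, HasDerivAt (fun z => w z - W (u z))
        (F (u z) + G (u z) * w z - (F (u z) / W (u z) + GH (u z)) * w z) z := by
      intro z hz
      have := (h.1 z).2.sub ((hWd (u z) (hm' z hz)).comp z (h.1 z).1)
      rw [cc_of_mem (hr z hz), cc_of_mem (hr z hz)] at this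
      exact this
    have hQle : ∀ z ∈ Ioc 0 T,
        F (u z) + G (u z) * w z - (F (u z) / W (u z) + GH (u z)) * w z
          ≤ - (F (u z) / W (u z)) * (w z - W (u z)) := by
      intro z hz
      have hzm := hm' z (Ioc_subset_Icc_self hz)
      have hWp := hW _ hzm
      have e : F (u z) = F (u z) / W (u z) * W (u z) := by field_simp
      have l := mul_le_mul_of_nonneg_right (hle _ hzm) (hw z hz).le
      nlinarith
    have hneg : ∀ z ∈ Icc 0 T, w z - W (u z) < 0 := by
      intro z hz
      have := anti_of_hasDeriv (v := fun z => (w z - W (u z)) * Real.exp (J z)) hz.1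
        (fun y hy => (hQd y ⟨hy.1, hy.2.trans hz.2⟩).mul ((prim_deriv hIc 0 y).exp)) (fun y hy => by
          have hy' : y ∈ Ioc 0 T := ⟨hy.1, hy.2.le.trans hz.2⟩
          have h1 := hQle y hy'
          have h2 : I y = F (u y) / W (u y) := by
            simp only [hI]
            rw [cc_of_mem (hr y (Ioc_subset_Icc_self hy')),
              cc_of_mem (hr y (Ioc_subset_Icc_self hy'))]
          rw [h2]
          have h3 := Real.exp_pos (J y)
          have h4 := mul_le_mul_of_nonneg_right h1 h3.le
          linarith)
      have hJ0 : J 0 = 0 := prim_self _ _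
      simp only [h.2.1, h.2.2, hJ0, Real.exp_zero] at this
      have hWq := hW q ⟨le_rfl, by linarith⟩
      by_contra hc
      push Not at hc
      have := mul_nonneg hc (Real.exp_pos (J z)).le
      linarith
    have hd1 := hneg T1 ⟨hT1.le, hT.le⟩
    rw [hu1, hw1] at hd1
    refine ⟨by linarith, ?_⟩
    have hra := range_after h.1 hT1 hT hw
    have := anti_of_hasDeriv (v := fun z => w z - W (u z)) hT.le
      (fun z hz => hQd z ⟨hT1.le.trans hz.1, hz.2⟩) (fun z hz => by
        have hz' : z ∈ Ioc 0 T := ⟨hT1.trans hz.1, hz.2.le⟩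
        refine (hQle z hz').trans ?_
        have hzm := hm' z (Ioc_subset_Icc_self hz')
        have h5 : F (u z) / W (u z) ≤ 0 := by
          apply div_nonpos_of_nonpos_of_nonneg _ (hW _ hzm).le
          apply (S.neg _ ⟨_, hzm.2⟩).le
          have := (hra z (Ioo_subset_Icc_self hz)).1
          rw [hu1] at this
          linarith
        have h6 := hneg z (Ioc_subset_Icc_self hz')
        nlinarith [mul_nonneg_of_nonpos_of_nonpos h5 h6.le])
    simp only [hu1, hw1, hu] at this
    linarith [hw T ⟨hT1.trans hT, le_rfl⟩]
  obtain ⟨s', hs', -⟩ := hW0 1 one_pos s1 (by linarith)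
  obtain ⟨s, hs, hd⟩ := hW0 _ (key s' hs').1 s1 (by linarith)
  linarith [(key s hs).2]

lemma exists_W {F GH u w : ℝ → ℝ} {a b : ℝ} (h : GS F GH u w) (hw : ∀ z, 0 < w z)
    (ha : Tendsto u atBot (nhds a)) (hb : Tendsto u atTop (nhds b))
    (hw0 : Tendsto w atTop (nhds 0)) :
    ∃ W : ℝ → ℝ, (∀ x ∈ Ioo a b, 0 < W x) ∧
      (∀ x ∈ Ioo a b, HasDerivAt W (F x / W x + GH x) x) ∧
      (∀ d > 0, ∀ s1 < b, ∃ s ∈ Ioo s1 b, W s < d) := by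
  have hmono : StrictMono u := strictMono_of_deriv_pos fun z => by
    rw [(h z).1.deriv]; exact hw z
  have hleft : ∀ z, Function.invFun u (u z) = z := Function.leftInverse_invFun hmono.injective
  have hsurj : ∀ x ∈ Ioo a b, ∃ z, u z = x := by
    intro x hx
    obtain ⟨z1, h1⟩ := (ha.eventually (gt_mem_nhds hx.1)).exists
    obtain ⟨z2, h2⟩ := (hb.eventually (lt_mem_nhds hx.2)).exists
    exact mem_range_of_exists_le_of_exists_ge h.continuous_u ⟨z1, h1.le⟩ ⟨z2, h2.le⟩
  refine ⟨fun x => w (Function.invFun u x), fun x _ => hw _, ?_, ?_⟩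
  · intro x hx
    obtain ⟨z, rfl⟩ := hsurj x hx
    have hs : HasStrictDerivAt u (w z) z :=
      hasStrictDerivAt_of_hasDerivAt_of_continuousAt (Eventually.of_forall fun y => (h y).1)
        h.continuous_w.continuousAt
    have h1 := (hs.to_local_left_inverse (hw z).ne'
      (Eventually.of_forall hleft)).hasDerivAt
    have h2 := (h z).2
    have h3 : HasDerivAt w (F (u z) + GH (u z) * w z) (Function.invFun u (u z)) := by
      rw [hleft]; exact h2
    have h4 := h3.comp (u z) h1
    refine h4.congr_deriv ?_
    simp only [hleft]
    have := (hw z).ne'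
    field_simp
  · intro d hd s1 hs1
    obtain ⟨z, h1, h2⟩ := ((hw0.eventually (gt_mem_nhds hd)).and
      (hb.eventually (lt_mem_nhds hs1))).exists
    refine ⟨u z, ⟨h2, ?_⟩, by simp only [hleft]; exact h1⟩
    exact (hmono (lt_add_one z)).trans_le (hmono.monotone.ge_of_tendsto hb _)

/-! ## Families on the half line -/

structure Fam (F g e : ℝ → ℝ) : Prop where
  hF : ContDiffOn ℝ 1 F (Ioi 0)
  hg : ContinuousOn g (Ioi 0)
  gpos : ∀ x, 0 < x → 0 < g x
  he : ContinuousOn e (Ioi 0)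
  bdd : ∃ M, ∀ x, 0 < x → |e x| ≤ M

def Gf (g e : ℝ → ℝ) (μ x : ℝ) : ℝ := g x * (e x + μ)

lemma Fam.lipF {F g e : ℝ → ℝ} (h : Fam F g e) {α β : ℝ} (hα : 0 < α) :
    ∃ L : NNReal, LipschitzOnWith L F (Icc α β) :=
  (h.hF.mono fun _ hx => hα.trans_le hx.1).exists_lipschitzOnWith (by norm_num)
    (convex_Icc _ _) isCompact_Icc

lemma Fam.contG {F g e : ℝ → ℝ} (h : Fam F g e) (μ : ℝ) : ContinuousOn (Gf g e μ) (Ioi 0) :=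
  h.hg.mul (h.he.add continuousOn_const)

lemma Fam.close {F g e : ℝ → ℝ} (h : Fam F g e) {α β : ℝ} (hα : 0 < α) (μ0 : ℝ) {ε : ℝ}
    (hε : 0 < ε) : ∀ᶠ μ in nhds μ0, ∀ x ∈ Icc α β, |Gf g e μ x - Gf g e μ0 x| ≤ ε := by
  obtain ⟨C, hC⟩ := (isCompact_Icc (a := α) (b := β)).exists_bound_of_continuousOn
    (h.hg.mono fun _ hx => hα.trans_le hx.1)
  have hc : Continuous fun μ : ℝ => |μ - μ0| * (|C| + 1) := by fun_prop
  have : ∀ᶠ μ in nhds μ0, |μ - μ0| * (|C| + 1) < ε :=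
    hc.tendsto μ0 |>.eventually (gt_mem_nhds (by simpa using hε))
  filter_upwards [this] with μ hμ x hx
  have h1 : Gf g e μ x - Gf g e μ0 x = g x * (μ - μ0) := by unfold Gf; ring
  rw [h1, abs_mul, mul_comm]
  have h2 : |g x| ≤ |C| + 1 := by
    have := hC x hx
    rw [Real.norm_eq_abs] at this
    linarith [le_abs_self C]
  exact (mul_le_mul_of_nonneg_left h2 (abs_nonneg _)).trans hμ.le

lemma Fam.mono {F g e : ℝ → ℝ} (h : Fam F g e) {μ ν x : ℝ} (hμ : μ ≤ ν) (hx : 0 < x) :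
    Gf g e μ x ≤ Gf g e ν x :=
  mul_le_mul_of_nonneg_left (by linarith) (h.gpos x hx).le

lemma Fam.ex_pos {F g e : ℝ → ℝ} (h : Fam F g e) : ∃ μ, ∀ x, 0 < x → 0 ≤ Gf g e μ x := by
  obtain ⟨M, hM⟩ := h.bdd
  refine ⟨M, fun x hx => mul_nonneg (h.gpos x hx).le ?_⟩
  linarith [(abs_le.1 (hM x hx)).1]

lemma Fam.ex_neg {F g e : ℝ → ℝ} (h : Fam F g e) : ∃ μ, ∀ x, 0 < x → Gf g e μ x ≤ 0 := by
  obtain ⟨M, hM⟩ := h.bdd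
  refine ⟨-M, fun x hx => mul_nonpos_of_nonneg_of_nonpos (h.gpos x hx).le ?_⟩
  linarith [(abs_le.1 (hM x hx)).2]

lemma lin_near {H : ℝ → ℝ} {d u0 : ℝ} (h : HasDerivAt H d u0) (h0 : H u0 = 0) (hd : d < 0) :
    ∃ k > 0, ∃ δ > 0, (∀ x ∈ Ioo (u0 - δ) u0, k * (u0 - x) ≤ H x) := by
  have h1 := (hasDerivAt_iff_tendsto_slope.1 h).eventually (gt_mem_nhds (show d < d/2 by linarith))
  rw [eventually_nhdsWithin_iff] at h1
  obtain ⟨r, hr, hb⟩ := Metric.eventually_nhds_iff.1 h1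
  refine ⟨-d/2, by linarith, r, hr, fun x hx => ?_⟩
  have := hb (y := x) (by rw [Real.dist_eq, abs_lt]; constructor <;> linarith [hx.1, hx.2])
    (ne_of_lt hx.2)
  rw [slope_def_field, h0, sub_zero, div_lt_iff_of_neg (by linarith [hx.2])] at this
  linarith

lemma Fam.setupR {F g e : ℝ → ℝ} (h : Fam F g e) {q u0 b d : ℝ} (hq0 : 0 < q) (hq : q < u0)
    (hb : u0 < b) (pos : ∀ x ∈ Ico q u0, 0 < F x) (zero : F u0 = 0)
    (neg : ∀ x ∈ Ioo u0 b, F x < 0) (hd : HasDerivAt F d u0) (hd0 : d < 0) : Setup F q u0 b where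
  hq := hq
  hb := hb
  lip := fun _ _ _ => h.lipF hq0
  pos := pos
  zero := zero
  neg := neg
  lin := lin_near hd zero hd0

lemma Fam.setupL {F g e : ℝ → ℝ} (h : Fam F g e) {q u0 b d : ℝ} (hq0 : 0 ≤ b) (hq : u0 < q)
    (hb : b < u0) (pos : ∀ x ∈ Ioo b u0, 0 < F x) (zero : F u0 = 0)
    (neg : ∀ x ∈ Ioc u0 q, F x < 0) (hd : HasDerivAt F d u0) (hd0 : d < 0) :
    Setup (fun x => - F (-x)) (-q) (-u0) (-b) where
  hq := by linarith
  hb := by linarith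
  lip := by
    intro s hs1 hs2
    obtain ⟨L, hL⟩ := h.lipF (α := -s) (β := q) (by linarith)
    refine ⟨L, LipschitzOnWith.of_dist_le_mul fun x hx y hy => ?_⟩
    have := hL.dist_le_mul (-x) ⟨by linarith [hx.2], by linarith [hx.1]⟩ (-y)
      ⟨by linarith [hy.2], by linarith [hy.1]⟩
    rw [dist_neg_neg] at this ⊢
    exact this
  pos := fun x hx => by
    have := neg (-x) ⟨by linarith [hx.2], by linarith [hx.1]⟩
    linarith
  zero := by simp [zero]
  neg := fun x hx => by
    have := pos (-x) ⟨by linarith [hx.2], by linarith [hx.1]⟩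
    linarith
  lin := by
    apply lin_near (d := d) _ (by simp [zero]) hd0
    have h1 : HasDerivAt F d (- -u0) := by rwa [neg_neg]
    have := (h1.scomp (-u0) (hasDerivAt_neg (-u0))).neg
    exact this.congr_deriv (by simp)

def Good (F : ℝ → ℝ) (Gm : ℝ → ℝ → ℝ) (q : ℝ) : Prop :=
  ∃ μ u w, GS F (Gm μ) u w ∧ (∀ z, 0 < u z) ∧ u 0 = q ∧ w 0 = 0 ∧ IsPeriodicSol u w ∧ Nonconst u w

lemma Fam.appR {F g e : ℝ → ℝ} (h : Fam F g e) {q u0 b : ℝ} (hq0 : 0 < q) (S : Setup F q u0 b)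
    (hcov : ∀ μ, ∃ s ∈ Ioo q b, ¬ R F q (Gf g e μ) s ∨ ¬ R F q (fun x => - Gf g e μ x) s) :
    Good F (Gf g e) q := by
  obtain ⟨μp, hp⟩ := h.ex_pos
  obtain ⟨μn, hn⟩ := h.ex_neg
  obtain ⟨μ, p, hp, u, w, h1, h2, h3, h4, h5, h6⟩ := S.main (Gm := Gf g e)
    (fun μ => (h.contG μ).mono fun x hx => hq0.trans_le hx.1)
    (fun μ0 s hs ε hε => h.close hq0 μ0 hε)
    ⟨μp, fun x hx => hp x (hq0.trans_le hx.1)⟩ ⟨μn, fun x hx => hn x (hq0.trans_le hx.1)⟩ hcov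
  exact ⟨μ, u, w, h1, fun z => hq0.trans_le (h2 z).1, h3, h4, h5, h6⟩

lemma GS.reflect {F G u w : ℝ → ℝ} (h : GS F G u w) :
    GS (fun x => - F (-x)) (fun x => G (-x)) (fun z => - u z) (fun z => - w z) := by
  intro z
  refine ⟨(h z).1.neg, (h z).2.neg.congr_deriv ?_⟩
  simp; ring

lemma Fam.appL {F g e : ℝ → ℝ} (h : Fam F g e) {q u0 b : ℝ} (hb : 0 ≤ b)
    (S : Setup (fun x => - F (-x)) (-q) (-u0) (-b))
    (hcov : ∀ μ, ∃ s ∈ Ioo (-q) (-b), ¬ R (fun x => - F (-x)) (-q) (fun x => Gf g e μ (-x)) s ∨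
      ¬ R (fun x => - F (-x)) (-q) (fun x => - Gf g e μ (-x)) s) :
    Good F (Gf g e) q := by
  obtain ⟨μp, hp⟩ := h.ex_pos
  obtain ⟨μn, hn⟩ := h.ex_neg
  obtain ⟨μ, p, hp, u, w, h1, h2, h3, h4, h5, h6⟩ := S.main (Gm := fun μ x => Gf g e μ (-x))
    (fun μ => (h.contG μ).comp continuous_neg.continuousOn fun x hx => by
      have := hx.2
      show 0 < -x
      linarith)
    (fun μ0 s hs ε hε => by
      filter_upwards [h.close (α := -s) (β := q) (by linarith [hs.2]) μ0 hε] with μ hμ x hx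
      exact hμ (-x) ⟨by linarith [hx.2], by linarith [hx.1]⟩)
    ⟨μp, fun x hx => hp (-x) (by linarith [hx.2])⟩
    ⟨μn, fun x hx => hn (-x) (by linarith [hx.2])⟩ hcov
  refine ⟨μ, fun z => - u z, fun z => - w z, ?_, fun z => ?_, by simp [h3], by simp [h4], ?_, ?_⟩
  · simpa using h1.reflect
  · linarith [(h2 z).2, hp.2]
  · obtain ⟨Z, hZ, H⟩ := h5
    exact ⟨Z, hZ, fun z => ⟨by simp [(H z).1], by simp [(H z).2]⟩⟩
  · obtain ⟨z, H⟩ := h6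
    exact ⟨z, by simpa using H⟩

lemma Setup.coverHet {F G GH u w : ℝ → ℝ} {q u0 b a : ℝ} (S : Setup F q u0 b)
    (hG : ContinuousOn G (Ico q b)) (h : GS F GH u w) (hw : ∀ z, 0 < w z)
    (ha : Tendsto u atBot (nhds a)) (hb : Tendsto u atTop (nhds b))
    (hw0 : Tendsto w atTop (nhds 0)) (haq : a < q) (hle : ∀ x ∈ Ico q b, G x ≤ GH x) :
    ∃ s ∈ Ioo q b, ¬ R F q G s := by
  obtain ⟨W, h1, h2, h3⟩ := exists_W h hw ha hb hw0
  exact S.het hG (fun x hx => h1 x ⟨haq.trans_le hx.1, hx.2⟩)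
    (fun x hx => h2 x ⟨haq.trans_le hx.1, hx.2⟩) hle h3

/-- Case 1. -/
lemma Fam.case1 {F g e : ℝ → ℝ} (h : Fam F g e) {q u1 u0 u2 d μb μf : ℝ} (h1 : 0 < u1)
    (hq1 : u1 < q) (hq : q < u0) (hb : u0 < u2) (pos : ∀ x ∈ Ioo u1 u0, 0 < F x) (zero : F u0 = 0)
    (neg : ∀ x ∈ Ioo u0 u2, F x < 0) (hd : HasDerivAt F d u0) (hd0 : d < 0)
    (hE1 : ∃ u w, GS F (Gf g e μb) u w ∧ HE1 u1 u2 u w)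
    (hE2 : ∃ u w, GS F (Gf g e μf) u w ∧ HE2 u1 u2 u w) (hμ : μf ≤ μb) :
    Good F (Gf g e) q := by
  have hq0 : 0 < q := h1.trans hq1
  have S := h.setupR hq0 hq hb (fun x hx => pos x ⟨hq1.trans_le hx.1, hx.2⟩) zero neg hd hd0
  refine h.appR hq0 S fun μ => ?_
  have hG : ContinuousOn (Gf g e μ) (Ico q u2) :=
    (h.contG μ).mono fun x hx => hq0.trans_le hx.1
  rcases le_total μ μb with hm | hm
  · obtain ⟨u, w, hs, t1, t2, t3, t4, hw⟩ := hE1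
    obtain ⟨s, hs, hR⟩ := S.coverHet hG hs hw t1 t2 t4 hq1
      (fun x hx => h.mono hm (hq0.trans_le hx.1))
    exact ⟨s, hs, Or.inl hR⟩
  · obtain ⟨u, w, hs, t1, t2, t3, t4, hw⟩ := hE2
    obtain ⟨s, hs, hR⟩ := S.coverHet (G := fun x => - Gf g e μ x) hG.neg hs.reverse
      (fun z => by have := hw (-z); linarith)
      (t2.comp tendsto_neg_atBot_atTop) (t1.comp tendsto_neg_atTop_atBot)
      (by simpa using (t3.comp tendsto_neg_atTop_atBot).neg) hq1
      (fun x hx => by have := h.mono (hμ.trans hm) (hq0.trans_le hx.1); linarith)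
    exact ⟨s, hs, Or.inr hR⟩

/-- Case 2. -/
lemma Fam.case2 {F g e : ℝ → ℝ} (h : Fam F g e) {q u1 u0 u2 d μb μf : ℝ} (h1 : 0 < u1)
    (hb : u1 < u0) (hq : u0 < q) (hq2 : q < u2) (pos : ∀ x ∈ Ioo u1 u0, 0 < F x) (zero : F u0 = 0)
    (neg : ∀ x ∈ Ioo u0 u2, F x < 0) (hd : HasDerivAt F d u0) (hd0 : d < 0)
    (hE1 : ∃ u w, GS F (Gf g e μb) u w ∧ HE1 u1 u2 u w)
    (hE2 : ∃ u w, GS F (Gf g e μf) u w ∧ HE2 u1 u2 u w) (hμ : μb ≤ μf) :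
    Good F (Gf g e) q := by
  have S := h.setupL h1.le hq hb pos zero (fun x hx => neg x ⟨hx.1, hx.2.trans_lt hq2⟩) hd hd0
  refine h.appL h1.le S fun μ => ?_
  have hG : ContinuousOn (fun x => Gf g e μ (-x)) (Ico (-q) (-u1)) :=
    (h.contG μ).comp continuous_neg.continuousOn fun x hx => by
      have := hx.2
      show 0 < -x
      linarith
  rcases le_total μ μf with hm | hm
  · obtain ⟨u, w, hs, t1, t2, t3, t4, hw⟩ := hE2
    obtain ⟨s, hs, hR⟩ := S.coverHet hG hs.reflect (fun z => by have := hw z; linarith)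
      t1.neg t2.neg (by simpa using t4.neg) (by linarith)
      (fun x hx => h.mono hm (by linarith [hx.2]))
    exact ⟨s, hs, Or.inl hR⟩
  · obtain ⟨u, w, hs, t1, t2, t3, t4, hw⟩ := hE1
    obtain ⟨s, hs, hR⟩ := S.coverHet (G := fun x => - Gf g e μ (-x)) hG.neg hs.reverse.reflect
      (fun z => by have := hw (-z); linarith)
      (t2.comp tendsto_neg_atBot_atTop).neg (t1.comp tendsto_neg_atTop_atBot).neg
      (by simpa using t3) (by linarith)
      (fun x hx => by
        have := h.mono (hμ.trans hm) (x := -x) (by linarith [hx.2])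
        linarith)
    exact ⟨s, hs, Or.inr hR⟩

/-- Case 3. -/
lemma Fam.case3 {F g e Ξ : ℝ → ℝ} (h : Fam F g e) {q u0 d C r μs : ℝ}
    (hb : 0 < u0) (hq : u0 < q) (pos : ∀ x ∈ Ioo 0 u0, 0 < F x) (zero : F u0 = 0)
    (neg : ∀ x ∈ Ioc u0 q, F x < 0) (hd : HasDerivAt F d u0) (hd0 : d < 0)
    (hΞ : ∀ x < 0, HasDerivAt Ξ (g (-x)) x) (hunb : ∀ C, ∀ s1 < 0, ∃ s ∈ Ioo s1 0, C < Ξ s)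
    (hr : 0 < r) (hC : 0 < C) (hFC : ∀ x ∈ Ioo 0 r, C * g x ≤ F x)
    (hle : ∀ x ∈ Ioo 0 r, e x ≤ - μs)
    (hgt : ∀ μ > μs, ∃ δ > 0, ∃ r' > 0, ∀ x ∈ Ioo 0 r', δ ≤ e x + μ) :
    Good F (Gf g e) q := by
  have S := h.setupL le_rfl hq hb pos zero neg hd hd0
  refine h.appL le_rfl S fun μ => ?_
  have hG : ContinuousOn (fun x => Gf g e μ (-x)) (Ico (-q) (-0)) :=
    (h.contG μ).comp continuous_neg.continuousOn fun x hx => by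
      have := hx.2
      show 0 < -x
      linarith
  rw [neg_zero] at *
  have hun : ∀ A > 0, ∀ s1 < 0, ∀ C, ∃ s ∈ Ioo s1 0, C < A * Ξ s := by
    intro A hA s1 hs1 C
    obtain ⟨s, hs, hs'⟩ := hunb (C / A) s1 hs1
    exact ⟨s, hs, by rwa [div_lt_iff₀ hA, mul_comm] at hs'⟩
  rcases le_or_gt μ μs with hm | hm
  · have hr1 := min_le_left r u0
    have hr2 := min_le_right r u0
    have hr3 : 0 < min r u0 := lt_min hr hb
    obtain ⟨s, hs, hR⟩ := S.death_a (s1 := - (min r u0 / 2)) hG ⟨by linarith, by linarith⟩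
      (Θ := fun x => C * Ξ x) (θ := fun x => C * g (-x))
      (fun x hx => (hΞ x hx.2).const_mul C)
      (fun x hx => by
        have := hFC (-x) ⟨by linarith [hx.2], by linarith [hx.1]⟩
        linarith)
      (fun x hx => mul_nonpos_of_nonneg_of_nonpos (h.gpos _ (by linarith [hx.2])).le (by
        have := hle (-x) ⟨by linarith [hx.2], by linarith [hx.1]⟩
        linarith)) (hun C hC _ (by linarith))
    exact ⟨s, hs, Or.inl hR⟩
  · obtain ⟨δ, hδ, r', hr', H⟩ := hgt μ hm
    have hr1 := min_le_left r' u0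
    have hr2 := min_le_right r' u0
    have hr3 : 0 < min r' u0 := lt_min hr' hb
    obtain ⟨s, hs, hR⟩ := S.death_b (G := fun x => - Gf g e μ (-x)) (s1 := - (min r' u0 / 2))
      hG.neg ⟨by linarith, by linarith⟩
      (Θ := fun x => δ * Ξ x) (θ := fun x => δ * g (-x))
      (fun x hx => (hΞ x hx.2).const_mul δ)
      (fun x hx => by
        have h1 := H (-x) ⟨by linarith [hx.2], by linarith [hx.1]⟩
        have h2 := h.gpos (-x) (by linarith [hx.2])
        have h3 := mul_le_mul_of_nonneg_left h1 h2.le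
        unfold Gf
        linarith) (hun δ hδ _ (by linarith))
    exact ⟨s, hs, Or.inr hR⟩

section App
variable {V V' V'' κ : ℝ → ℝ} {τ UM K c : ℝ}

lemma A1.dV (h : A1 V V' V'' UM) {u : ℝ} (hu : 0 < u) : HasDerivAt V (V' u) u :=
  (h.1 u hu.le).hasDerivAt (Ici_mem_nhds hu)

lemma A1.contV (h : A1 V V' V'' UM) : ContinuousOn V (Ici 0) :=
  fun u hu => (h.1 u hu).continuousWithinAt

lemma A1.c1V (h : A1 V V' V'' UM) : ContDiffOn ℝ 1 V (Ioi 0) := by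
  rw [contDiffOn_one_iff_derivWithin isOpen_Ioi.uniqueDiffOn]
  refine ⟨fun u hu => (h.dV hu).differentiableAt.differentiableWithinAt, ?_⟩
  refine (h.2.1.mono Ioi_subset_Ici_self).congr fun u hu => ?_
  rw [derivWithin_of_isOpen isOpen_Ioi hu, (h.dV hu).deriv]

lemma c1g1 (h2 : A2 κ) (hτ : 0 < τ) : ContDiffOn ℝ 1 (g1TV κ τ) (Ioi 0) := by
  have hi : ContDiffOn ℝ 1 (fun u : ℝ => 1 / u) (Ioi 0) :=
    contDiffOn_const.div contDiffOn_id fun x hx => (ne_of_gt hx)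
  have hk : ContDiffOn ℝ 1 (fun u => κ (1 / u)) (Ioi 0) :=
    h2.1.comp hi fun x hx => mem_Ioi.2 (one_div_pos.2 (mem_Ioi.1 hx))
  exact contDiffOn_const.div (contDiffOn_const.mul hk) fun x hx =>
    (mul_pos hτ (h2.2 _ (one_div_pos.2 hx))).ne'

lemma g1pos (h2 : A2 κ) (hτ : 0 < τ) {u : ℝ} (hu : 0 < u) : 0 < g1TV κ τ u :=
  one_div_pos.2 (mul_pos hτ (h2.2 _ (one_div_pos.2 hu)))

lemma g2eq (u : ℝ) : g2TV κ τ u = u / 2 * g1TV κ τ u := by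
  unfold g2TV g1TV; ring

lemma df (h : A1 V V' V'' UM) (K c : ℝ) {u : ℝ} (hu : 0 < u) :
    HasDerivAt (fTV V K c) (fdTV V' K u) u := by
  have := ((((hasDerivAt_id u).const_mul K).sub (h.dV hu)).sub_const c).div_const K
  exact this.congr_deriv (by simp [fdTV])

lemma contf (h : A1 V V' V'' UM) (K c : ℝ) : ContinuousOn (fTV V K c) (Ici 0) := by
  unfold fTV
  have := h.contV
  fun_prop

def FT (V κ : ℝ → ℝ) (τ K c u : ℝ) : ℝ := g1TV κ τ u * fTV V K c u

lemma fam (h : A1 V V' V'' UM) (h2 : A2 κ) (hτ : 0 < τ) (hK : 0 < K) :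
    Fam (FT V κ τ K c) (g2TV κ τ) (fdTV V' K) where
  hF := by
    refine (c1g1 h2 hτ).mul ?_
    have := h.c1V
    unfold fTV
    fun_prop
  hg := by
    have : ContinuousOn (fun u => u / 2 * g1TV κ τ u) (Ioi 0) :=
      (continuous_id.div_const 2).continuousOn.mul (c1g1 h2 hτ).continuousOn
    exact this.congr fun u _ => g2eq u
  gpos := fun u hu => by rw [g2eq]; exact mul_pos (by linarith) (g1pos h2 hτ hu)
  he := (continuousOn_const.sub (h.2.1.mono Ioi_subset_Ici_self)).div_const K
  bdd := by
    refine ⟨(K + V' UM) / K, fun x hx => ?_⟩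
    have p1 := h.2.2.2.2.1 x hx
    have p2 := h.2.2.2.2.2.2.2.2.1 x hx
    unfold fdTV
    rw [abs_div, abs_of_pos hK]
    gcongr
    rw [abs_le]; constructor <;> linarith

lemma isTV_iff {μ : ℝ} {u w : ℝ → ℝ} : IsTVSol V V' κ τ K c μ u w ↔
    GS (FT V κ τ K c) (Gf (g2TV κ τ) (fdTV V' K) μ) u w :=
  ⟨fun h z => ⟨h.1 z, h.2 z⟩, fun h => ⟨fun z => (h z).1, fun z => (h z).2⟩⟩

lemma dFT (h : A1 V V' V'' UM) (h2 : A2 κ) (hτ : 0 < τ) {u0 : ℝ} (hu : 0 < u0)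
    (h0 : fTV V K c u0 = 0) :
    HasDerivAt (FT V κ τ K c) (g1TV κ τ u0 * fdTV V' K u0) u0 := by
  have d1 : DifferentiableAt ℝ (g1TV κ τ) u0 :=
    ((c1g1 h2 hτ).differentiableOn (by norm_num)).differentiableAt (Ioi_mem_nhds hu)
  have := d1.hasDerivAt.mul (df h K c hu)
  exact this.congr_deriv (by rw [h0]; ring)

lemma V'mono (h : A1 V V' V'' UM) : StrictMonoOn V' (Icc 0 UM) := by
  obtain ⟨-, hc, hd, -, -, -, -, hUM, hmax, hz⟩ := h
  have hcc : ContinuousOn V' (Icc 0 UM) := hc.mono Icc_subset_Ici_self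
  rcases hasDerivWithinAt_forall_lt_or_forall_gt_of_forall_ne (s := Ioo 0 UM) (convex_Ioo _ _)
    (fun x hx => (hd x hx.1).hasDerivWithinAt) (m := 0)
    (fun x hx he => (hx.2.ne ((hz x hx.1).1 he))) with H | H
  · exfalso
    have : StrictAntiOn V' (Icc 0 UM) := strictAntiOn_of_deriv_neg (convex_Icc _ _) hcc
      fun x hx => by
        rw [interior_Icc] at hx
        rw [(hd x hx.1).deriv]; exact H x hx
    have := this (a := UM / 2) ⟨by linarith, by linarith⟩ ⟨hUM.le, le_rfl⟩ (by linarith)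
    linarith [hmax (UM / 2) (by linarith)]
  · exact strictMonoOn_of_deriv_pos (convex_Icc _ _) hcc fun x hx => by
      rw [interior_Icc] at hx
      rw [(hd x hx.1).deriv]; exact H x hx

lemma V'anti (h : A1 V V' V'' UM) : StrictAntiOn V' (Ici UM) := by
  obtain ⟨-, hc, hd, -, -, -, -, hUM, hmax, hz⟩ := h
  have hcc : ContinuousOn V' (Ici UM) := hc.mono (Ici_subset_Ici.2 hUM.le)
  rcases hasDerivWithinAt_forall_lt_or_forall_gt_of_forall_ne (s := Ioi UM) (convex_Ioi _)
    (fun x hx => (hd x (hUM.trans hx)).hasDerivWithinAt) (m := 0)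
    (fun x hx he => (ne_of_gt hx ((hz x (hUM.trans hx)).1 he))) with H | H
  · exact strictAntiOn_of_deriv_neg (convex_Ici _) hcc fun x hx => by
      rw [interior_Ici] at hx
      rw [(hd x (hUM.trans hx)).deriv]; exact H x hx
  · exfalso
    have : StrictMonoOn V' (Ici UM) := strictMonoOn_of_deriv_pos (convex_Ici _) hcc
      fun x hx => by
        rw [interior_Ici] at hx
        rw [(hd x (hUM.trans hx)).deriv]; exact H x hx
    have := this (a := UM) (b := UM + 1) self_mem_Ici (by simp) (by linarith)
    linarith [hmax (UM + 1) (by linarith)]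

/-- shape of `f`. -/
lemma shape (h : A1 V V' V'' UM) (hK : 0 < K) {a m : ℝ} (ha : a ∈ Ioo 0 UM) (haK : V' a = K)
    (hm : UM < m) (hmK : V' m = K) :
    StrictMonoOn (fTV V K c) (Icc 0 a) ∧ StrictAntiOn (fTV V K c) (Icc a m) ∧
    StrictMonoOn (fTV V K c) (Ici m) ∧ (∀ x ∈ Ioo a m, fdTV V' K x < 0) := by
  have hf := contf h K c
  have m1 := V'mono h
  have m2 := V'anti h
  have ham : a < m := ha.2.trans hm
  have hneg : ∀ x ∈ Ioo a m, fdTV V' K x < 0 := by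
    intro x hx
    have : K < V' x := by
      rcases le_total x UM with hl | hl
      · rw [← haK]; exact m1 ⟨ha.1.le, ha.2.le⟩ ⟨by linarith [ha.1, hx.1], hl⟩ hx.1
      · rw [← hmK]; exact m2 hl hm.le hx.2
    exact div_neg_of_neg_of_pos (by linarith) hK
  refine ⟨?_, ?_, ?_, hneg⟩
  · refine strictMonoOn_of_deriv_pos (convex_Icc _ _) (hf.mono Icc_subset_Ici_self) fun x hx => ?_
    rw [interior_Icc] at hx
    rw [(df h K c hx.1).deriv]
    refine div_pos ?_ hK
    have := m1 (a := x) (b := a) ⟨hx.1.le, by linarith [hx.2, ha.2]⟩ ⟨ha.1.le, ha.2.le⟩ hx.2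
    linarith
  · refine strictAntiOn_of_deriv_neg (convex_Icc _ _)
      (hf.mono fun x hx => ha.1.le.trans hx.1) fun x hx => ?_
    rw [interior_Icc] at hx
    rw [(df h K c (ha.1.trans hx.1)).deriv]
    exact hneg x hx
  · have hm0 : 0 < m := ha.1.trans ham
    refine strictMonoOn_of_deriv_pos (convex_Ici _) (hf.mono (Ici_subset_Ici.2 hm0.le))
      fun x hx => ?_
    rw [interior_Ici] at hx
    rw [(df h K c (hm0.trans hx)).deriv]
    refine div_pos ?_ hK
    have := m2 (a := m) (b := x) hm.le (hm.trans hx).le hx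
    linarith

/-- signs of `f` between consecutive zeros. -/
lemma signs (h : A1 V V' V'' UM) (hK : 0 < K) {a m u1 u0 u2 : ℝ} (ha : a ∈ Ioo 0 UM)
    (haK : V' a = K) (hm : UM < m) (hmK : V' m = K) (hu1 : 0 ≤ u1) (h10 : u1 < u0) (h02 : u0 < u2)
    (z1 : 0 ≤ fTV V K c u1) (z1' : u1 = 0 ∨ fTV V K c u1 = 0)
    (z0 : fTV V K c u0 = 0) (z2 : fTV V K c u2 = 0) :
    (∀ x ∈ Ioo u1 u0, 0 < fTV V K c x) ∧ (∀ x ∈ Ioo u0 u2, fTV V K c x < 0) ∧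
    fdTV V' K u0 < 0 := by
  obtain ⟨i1, i2, i3, hn⟩ := shape (c := c) h hK ha haK hm hmK
  have ham : a < m := ha.2.trans hm
  have c1 : a < u0 := by
    by_contra hc
    push Not at hc
    have := i1 (a := u1) (b := u0) ⟨hu1, by linarith⟩ ⟨by linarith, hc⟩ h10
    linarith
  have c2 : u0 < m := by
    by_contra hc
    push Not at hc
    have := i3 (a := u0) (b := u2) hc (hc.trans h02.le) h02
    linarith
  have c3 : u1 < a := by
    rcases z1' with e | e
    · rw [e]; exact ha.1
    · by_contra hc
      push Not at hc
      have := i2 (a := u1) (b := u0) ⟨hc, by linarith⟩ ⟨c1.le, c2.le⟩ h10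
      linarith
  have c4 : m < u2 := by
    by_contra hc
    push Not at hc
    have := i2 (a := u0) (b := u2) ⟨c1.le, c2.le⟩ ⟨by linarith, hc⟩ h02
    linarith
  refine ⟨fun x hx => ?_, fun x hx => ?_, hn u0 ⟨c1, c2⟩⟩
  · rcases le_total x a with hl | hl
    · have := i1 (a := u1) (b := x) ⟨hu1, c3.le⟩ ⟨by linarith [hx.1], hl⟩ hx.1
      linarith
    · have := i2 (a := x) (b := u0) ⟨hl, by linarith [hx.2]⟩ ⟨c1.le, c2.le⟩ hx.2
      linarith
  · rcases le_total x m with hl | hl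
    · have := i2 (a := u0) (b := x) ⟨c1.le, c2.le⟩ ⟨by linarith [hx.1], hl⟩ hx.1
      linarith
    · have := i3 (a := x) (b := u2) hl c4.le hx.2
      linarith

lemma exists_Xi (h2 : A2 κ) (hτ : 0 < τ) (hH : CondH κ) :
    ∃ Ξ : ℝ → ℝ, (∀ x < 0, HasDerivAt Ξ (g2TV κ τ (-x)) x) ∧
      ∀ C, ∀ s1 < 0, ∃ s ∈ Ioo s1 0, C < Ξ s := by
  set φ : ℝ → ℝ := fun ρ => 1 / (ρ ^ 3 * κ ρ) with hφ
  have hφc : ContinuousOn φ (Ioi 0) := by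
    refine continuousOn_const.div ((continuous_pow 3).continuousOn.mul h2.1.continuousOn) ?_
    intro x hx
    exact (mul_pos (pow_pos hx 3) (h2.2 x hx)).ne'
  have hφp : ∀ x, 0 < x → 0 < φ x := fun x hx =>
    one_div_pos.2 (mul_pos (pow_pos hx 3) (h2.2 x hx))
  have hInt : ∀ a b : ℝ, 0 < a → 0 < b → IntervalIntegrable φ volume a b := by
    intro a b ha hb
    apply ContinuousOn.intervalIntegrable
    refine hφc.mono fun x hx => ?_
    exact (lt_min ha hb).trans_le hx.1
  have hder : ∀ ρ, 0 < ρ → HasDerivAt (fun ρ => ∫ t in (1:ℝ)..ρ, φ t) (φ ρ) ρ := by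
    intro ρ hρ
    exact intervalIntegral.integral_hasDerivAt_right (hInt 1 ρ one_pos hρ)
      (hφc.stronglyMeasurableAtFilter isOpen_Ioi ρ hρ) (hφc.continuousAt (Ioi_mem_nhds hρ))
  refine ⟨fun x => (1 / (2 * τ)) * ∫ t in (1:ℝ)..(-1 / x), φ t, fun x hx => ?_, ?_⟩
  · have hx' : 0 < -1 / x := div_pos_of_neg_of_neg (by norm_num) hx
    have hd : HasDerivAt (fun x : ℝ => -1 / x) (1 / x ^ 2) x := by
      have := (hasDerivAt_const x (-1:ℝ)).div (hasDerivAt_id x) hx.ne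
      exact this.congr_deriv (by simp)
    have := ((hder _ hx').comp x hd).const_mul (1 / (2 * τ))
    refine this.congr_deriv ?_
    simp only [hφ, g2TV]
    rw [show 1 / -x = -1 / x by rw [div_neg, neg_div]]
    have hκ := (h2.2 _ hx').ne'
    generalize κ (-1 / x) = k at *
    have := hx.ne
    have := hτ.ne'
    field_simp
    try ring
  · intro C s1 hs1
    by_contra hcon
    push Not at hcon
    apply hH
    set ρ1 := max 1 (-1 / s1) with hρ1
    refine integrableOn_Ioi_of_intervalIntegral_norm_bounded (l := atTop) (b := fun n : ℝ => max n 1)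
      (C * (2 * τ)) 1 (fun n => ?_) (tendsto_atTop_mono (fun n => le_max_left n 1) tendsto_id) ?_
    · exact (hInt 1 (max n 1) one_pos (lt_max_of_lt_right one_pos)).1
    · filter_upwards [eventually_gt_atTop ρ1] with n hn
      have hn1 : 1 < n := (le_max_left _ _).trans_lt hn
      have hn2 : -1 / s1 < n := (le_max_right _ _).trans_lt hn
      have hn0 : 0 < n := by linarith
      rw [max_eq_left hn1.le]
      have e : ∫ t in (1:ℝ)..n, ‖φ t‖ = ∫ t in (1:ℝ)..n, φ t := by
        apply intervalIntegral.integral_congr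
        intro t ht
        rw [uIcc_of_le hn1.le] at ht
        exact Real.norm_of_nonneg (hφp t (by linarith [ht.1])).le
      have hlt : s1 < -1 / n := by
        rw [div_lt_iff_of_neg hs1] at hn2
        rw [lt_div_iff₀ hn0]
        linarith
      have := hcon (-1 / n) ⟨hlt, div_neg_of_neg_of_pos (by norm_num) hn0⟩
      rw [show -1 / (-1 / n) = n by field_simp] at this
      rw [e]
      have h3 : 0 < 2 * τ := by linarith
      rwa [one_div, inv_mul_le_iff₀ h3, mul_comm] at this

end App

theorem stmt6
    (V V' V'' κ : ℝ → ℝ) (τ UM K c K₁ : ℝ) (uMx umx : ℝ → ℝ)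
    (hA1 : A1 V V' V'' UM) (hA2 : A2 κ) (hτ : 0 < τ) (hK : K ≠ 0)
    (huMx : UMaxHyp V' UM uMx) (humx : UMinHyp V' UM umx)
    (hK1 : K1Hyp V V' UM umx K₁)
    (hC : CondC V' κ UM K₁ K) (u0 u2 q : ℝ) (Adm : Set ℝ)
    (hAdm :
      ((K, c) ∈ D1 V V' UM uMx umx ∧
        ∃ u1 μb μf, ZerosD1 V K c u1 u0 u2 ∧
          (∀ μ, HasHE1 V V' κ τ K c μ u1 u2 ↔ μ = μb) ∧
          (∀ μ, HasHE2 V V' κ τ K c μ u1 u2 ↔ μ = μf) ∧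
          ((μf ≤ μb ∧ Adm = Ioo u1 u0) ∨ (μb < μf ∧ Adm = Ioo u0 u2))) ∨
      ((K, c) ∈ D2 V V' umx K₁ ∧ ZerosD2 V K c u0 u2 ∧ Adm = Ioo u0 u2))
    (hq : q ∈ Adm) :
    ∃ (μper : ℝ) (u w : ℝ → ℝ),
      IsTVSol V V' κ τ K c μper u w ∧ (∀ z, 0 < u z) ∧
      u 0 = q ∧ w 0 = 0 ∧ IsPeriodicSol u w ∧ Nonconst u w := by
  obtain ⟨hk0, hkM, hk1, hk2, hk3⟩ := hK1
  have hV0 : V' 0 < K := by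
    rcases hC with h | h
    · linarith [h.1]
    · exact h.2.1
  have hVM : K < V' UM := by
    rcases hC with h | h
    · exact h.2
    · linarith [h.2.2]
  have hUM : 0 < UM := hA1.2.2.2.2.2.2.2.1
  have hmono := V'mono hA1
  have hV00 : 0 ≤ V' 0 := by
    have ht : Tendsto V' (nhdsWithin 0 (Ioi 0)) (nhds (V' 0)) :=
      (hA1.2.1 0 self_mem_Ici).mono_left (nhdsWithin_mono _ Ioi_subset_Ici_self)
    refine ge_of_tendsto ht ?_
    filter_upwards [self_mem_nhdsWithin] with x hx
    exact (hA1.2.2.2.2.1 x hx).le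
  have hKp : 0 < K := by linarith
  obtain ⟨ha, haK⟩ := huMx K hV0 hVM
  obtain ⟨hm, hmK⟩ := humx K hKp hVM
  have FM : Fam (FT V κ τ K c) (g2TV κ τ) (fdTV V' K) := fam hA1 hA2 hτ hKp
  have key : Good (FT V κ τ K c) (Gf (g2TV κ τ) (fdTV V' K)) q := by
    rcases hAdm with ⟨-, u1, μb, μf, ⟨h1, h10, h02, z1, z0, z2, -⟩, hb, hf, hcase⟩ | ⟨hD, hZ, hA⟩
    · obtain ⟨s1, s2, s3⟩ := signs hA1 hKp ha haK hm hmK h1.le h10 h02 z1.ge (Or.inr z1) z0 z2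
      have hu0 : 0 < u0 := h1.trans h10
      have pos : ∀ x ∈ Ioo u1 u0, 0 < FT V κ τ K c x := fun x hx =>
        mul_pos (g1pos hA2 hτ (h1.trans hx.1)) (s1 x hx)
      have neg : ∀ x ∈ Ioo u0 u2, FT V κ τ K c x < 0 := fun x hx =>
        mul_neg_of_pos_of_neg (g1pos hA2 hτ (hu0.trans hx.1)) (s2 x hx)
      have zero : FT V κ τ K c u0 = 0 := by simp [FT, z0]
      have hd := dFT (K := K) (c := c) hA1 hA2 hτ hu0 z0
      have hd0 := mul_neg_of_pos_of_neg (g1pos hA2 hτ hu0) s3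
      obtain ⟨ub, wb, eb1, -, eb2⟩ := (hb μb).2 rfl
      obtain ⟨uf, wf, ef1, -, ef2⟩ := (hf μf).2 rfl
      rcases hcase with ⟨hμ, hA⟩ | ⟨hμ, hA⟩
      · rw [hA] at hq
        exact FM.case1 h1 hq.1 hq.2 h02 pos zero neg hd hd0 ⟨ub, wb, isTV_iff.1 eb1, eb2⟩
          ⟨uf, wf, isTV_iff.1 ef1, ef2⟩ hμ
      · rw [hA] at hq
        exact FM.case2 h1 h10 hq.1 hq.2 pos zero neg hd hd0 ⟨ub, wb, isTV_iff.1 eb1, eb2⟩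
          ⟨uf, wf, isTV_iff.1 ef1, ef2⟩ hμ.le
    · obtain ⟨hu0, h02, z0, z2, -⟩ := hZ
      have hKK : K < K₁ := by
        rcases hD with h | h
        · exact h.2.1
        · exact h.2.1
      have hcc : c ≤ c0v V := by
        rcases hD with h | h
        · exact h.2.2.le
        · exact h.2.2.2.le
      have hH : CondH κ := by
        rcases hC with h | h
        · linarith [h.1]
        · exact h.1
      have hf0 : 0 ≤ fTV V K c 0 := by
        refine div_nonneg ?_ hKp.le
        unfold c0v at hcc
        linarith
      obtain ⟨s1, s2, s3⟩ := signs hA1 hKp ha haK hm hmK le_rfl hu0 h02 hf0 (Or.inl rfl) z0 z2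
      rw [hA] at hq
      have pos : ∀ x ∈ Ioo 0 u0, 0 < FT V κ τ K c x := fun x hx =>
        mul_pos (g1pos hA2 hτ hx.1) (s1 x hx)
      have neg : ∀ x ∈ Ioc u0 q, FT V κ τ K c x < 0 := fun x hx =>
        mul_neg_of_pos_of_neg (g1pos hA2 hτ (hu0.trans hx.1)) (s2 x ⟨hx.1, hx.2.trans_lt hq.2⟩)
      have zero : FT V κ τ K c u0 = 0 := by simp [FT, z0]
      have hd := dFT (K := K) (c := c) hA1 hA2 hτ hu0 z0
      have hd0 := mul_neg_of_pos_of_neg (g1pos hA2 hτ hu0) s3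
      obtain ⟨Ξ, hΞ, hunb⟩ := exists_Xi hA2 hτ hH
      set a := uMx K with hadef
      have ha0 : 0 < a := ha.1
      have haM : a < UM := ha.2
      set C := fdTV V' K (a / 2) with hCdef
      have hC0 : 0 < C := by
        refine div_pos ?_ hKp
        have := hmono (a := a / 2) (b := a) ⟨by linarith, by linarith⟩ ⟨ha0.le, haM.le⟩
          (by linarith)
        linarith
      have hfl : MonotoneOn (fun x => fTV V K c x - C * x) (Icc 0 (a / 2)) := by
        have hdd : ∀ x, 0 < x → HasDerivAt (fun x => fTV V K c x - C * x) (fdTV V' K x - C) x := by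
          intro x hx
          exact ((df hA1 K c hx).sub ((hasDerivAt_id x).const_mul C)).congr_deriv (by simp)
        refine monotoneOn_of_deriv_nonneg (convex_Icc _ _) ?_ ?_ ?_
        · exact ((contf hA1 K c).mono Icc_subset_Ici_self).sub
            (continuous_const.mul continuous_id).continuousOn
        · intro x hx
          rw [interior_Icc] at hx
          exact (hdd x hx.1).differentiableAt.differentiableWithinAt
        · intro x hx
          rw [interior_Icc] at hx
          rw [(hdd x hx.1).deriv, hCdef, sub_nonneg]
          have := hmono (a := x) (b := a / 2) ⟨hx.1.le, by linarith [hx.2]⟩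
            ⟨by linarith, by linarith⟩ hx.2
          unfold fdTV
          gcongr
      refine FM.case3 hu0 hq.1 pos zero neg hd hd0 hΞ hunb (r := a / 2) (C := 2 * C)
        (μs := - fdTV V' K 0) (by linarith) (by linarith) ?_ ?_ ?_
      · intro x hx
        have h1 := hfl (a := 0) (b := x) ⟨le_rfl, by linarith⟩ ⟨hx.1.le, hx.2.le⟩ hx.1.le
        simp only [mul_zero, sub_zero] at h1
        have h2 : C * x ≤ fTV V K c x := by linarith
        have h3 := mul_le_mul_of_nonneg_left h2 (g1pos hA2 hτ hx.1).le
        rw [g2eq]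
        unfold FT
        linarith
      · intro x hx
        rw [neg_neg]
        have := hmono (a := 0) (b := x) ⟨le_rfl, hUM.le⟩ ⟨hx.1.le, by linarith [hx.2]⟩ hx.1
        unfold fdTV
        gcongr
      · intro μ hμ
        have hp : 0 < (fdTV V' K 0 + μ) / 2 := by linarith
        refine ⟨(fdTV V' K 0 + μ) / 2, hp, ?_⟩
        have ht : Tendsto (fdTV V' K) (nhdsWithin 0 (Ioi 0)) (nhds (fdTV V' K 0)) :=
          (tendsto_const_nhds.sub ((hA1.2.1 0 self_mem_Ici).mono_left
            (nhdsWithin_mono _ Ioi_subset_Ici_self))).div_const K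
        have hev := ht.eventually (lt_mem_nhds (a := (fdTV V' K 0 - μ) / 2) (by linarith))
        obtain ⟨r, hr, hr'⟩ := mem_nhdsGT_iff_exists_Ioo_subset.1 hev
        refine ⟨r, hr, fun x hx => ?_⟩
        have : (fdTV V' K 0 - μ) / 2 < fdTV V' K x := hr' hx
        linarith
  obtain ⟨μ, u, w, h1, h2⟩ := key
  exact ⟨μ, u, w, isTV_iff.2 h1, h2⟩

end TrafficTW
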